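/- arXiv:1512.06918 — 4 statements merged into one kernel-verified Lean document; each statement's English description precedes it below -/
import Mathlib

section
/- Let ψ be a smooth function on ℝ supported in {1/4 ≤ |x| ≤ 1}, ψ_j(t) = 2^{-j} ψ(2^{-j} t), and define H_j(x,y) = ∫ e^{2πi(x t² - y t)} ψ_j(t) dt. With ‖(x,y)‖_j := 2^{2j}|x| + 2^{j}|y|, one has |H_j(x,y)| ≲ min{ ‖(x,y)‖_j , ‖(x,y)‖_j^{-1/2} }, uniformly in j ∈ ℕ and (x,y) ∈ ℝ². -/
open Real Set

noncomputable section

open MeasureTheory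

/-- Integration by parts with the regularised weight `D/(D²+ε²)`, `D = 2Xt - Y`, `ε² = N`. -/
lemma core_ibp (ψ : ℝ → ℝ) (hψ : ContDiff ℝ (⊤ : ℕ∞) ψ) (hc : HasCompactSupport ψ)
    (X Y e : ℝ) (he : 0 < e) (hX : |X| ≤ e ^ 2) :
    ‖∫ t : ℝ, Complex.exp (Complex.I * ((2 * π * (X * t ^ 2 - Y * t) : ℝ) : ℂ)) * ((ψ t : ℝ) : ℂ)‖
      ≤ 2 * (∫ t : ℝ, |ψ t| * (e ^ 2 / ((2 * X * t - Y) ^ 2 + e ^ 2)))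
        + (∫ t : ℝ, |deriv ψ t|) / e := by
  have hpi := Real.pi_pos
  have hpi3 := Real.pi_gt_three
  have hD : ∀ t, 0 < (2 * X * t - Y) ^ 2 + e ^ 2 := fun t => by positivity
  have hψc : Continuous ψ := hψ.continuous
  have hψ'c : Continuous (deriv ψ) := hψ.continuous_deriv (by simp)
  have hc' : HasCompactSupport (deriv ψ) := hc.deriv
  set g : ℝ → ℝ := fun t => (2 * X * t - Y) / ((2 * X * t - Y) ^ 2 + e ^ 2) with hg
  set g' : ℝ → ℝ := fun t => 2 * X * (e ^ 2 - (2 * X * t - Y) ^ 2) /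
    ((2 * X * t - Y) ^ 2 + e ^ 2) ^ 2 with hg'
  set E : ℝ → ℂ := fun t => Complex.exp (Complex.I * ((2 * π * (X * t ^ 2 - Y * t) : ℝ) : ℂ))
    with hE
  have hgc : Continuous g := by
    apply Continuous.div (by fun_prop) (by fun_prop) (fun t => (hD t).ne')
  have hg'c : Continuous g' := by
    apply Continuous.div (by fun_prop) (by fun_prop) (fun t => (pow_pos (hD t) 2).ne')
  have hEc : Continuous E := by fun_prop
  have hEn : ∀ t, ‖E t‖ = 1 := fun t => by
    simp only [hE]; rw [mul_comm]; exact Complex.norm_exp_ofReal_mul_I _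
  have hgd : ∀ t, HasDerivAt g (g' t) t := by
    intro t
    have h1 : HasDerivAt (fun t : ℝ => 2 * X * t - Y) (2 * X) t := by
      simpa using ((hasDerivAt_id t).const_mul (2 * X)).sub_const Y
    have h2 := h1.div ((h1.pow 2).add_const (e ^ 2)) (hD t).ne'
    refine h2.congr_deriv ?_
    simp only [hg', Pi.pow_apply]
    congr 1
    push_cast
    ring
  have hEd : ∀ t, HasDerivAt E (E t * (Complex.I * ((2 * π * (2 * X * t - Y) : ℝ) : ℂ))) t := by
    intro t
    have h1 : HasDerivAt (fun t : ℝ => 2 * π * (X * t ^ 2 - Y * t)) (2 * π * (2 * X * t - Y)) t := by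
      have := ((((hasDerivAt_id t).pow 2).const_mul X).sub ((hasDerivAt_id t).const_mul Y)).const_mul
        (2 * π)
      refine this.congr_deriv ?_
      simp; ring
    exact (h1.ofReal_comp.const_mul Complex.I).cexp
  have hψd : ∀ t, HasDerivAt ψ (deriv ψ t) t := fun t =>
    ((hψ.differentiable (by simp)) t).hasDerivAt
  set F : ℝ → ℂ := fun t => E t * ((ψ t * g t : ℝ) : ℂ) with hF
  set F' : ℝ → ℂ := fun t => E t * (Complex.I * ((2 * π * (2 * X * t - Y) : ℝ) : ℂ)) *
      ((ψ t * g t : ℝ) : ℂ) + E t * ((deriv ψ t * g t + ψ t * g' t : ℝ) : ℂ) with hF'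
  have hFd : ∀ t, HasDerivAt F (F' t) t := fun t =>
    (hEd t).mul ((hψd t).mul (hgd t)).ofReal_comp
  have hFs : HasCompactSupport F := by
    apply hc.mono
    intro t ht h0
    apply ht
    simp [hF, h0]
  have hF's : HasCompactSupport F' := by
    have : F' = deriv F := funext fun t => (hFd t).deriv.symm
    rw [this]; exact hFs.deriv
  have hF'i : Integrable F' :=
    Continuous.integrable_of_hasCompactSupport (by simp only [hF']; fun_prop) hF's
  have hFi : Integrable F :=
    Continuous.integrable_of_hasCompactSupport (by simp only [hF]; fun_prop) hFs
  have h0 : ∫ t, F' t = 0 := integral_eq_zero_of_hasDerivAt_of_integrable hFd hF'i hFi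
  have hGi : Integrable (fun t => E t * ((ψ t : ℝ) : ℂ)) := by
    apply Continuous.integrable_of_hasCompactSupport (by fun_prop)
    apply hc.mono
    intro t ht h0
    apply ht
    simp [h0]
  have hk1 : Integrable (fun t => |ψ t| * (e ^ 2 / ((2 * X * t - Y) ^ 2 + e ^ 2))) := by
    apply Continuous.integrable_of_hasCompactSupport
    · exact hψc.abs.mul (Continuous.div (by fun_prop) (by fun_prop) (fun t => (hD t).ne'))
    apply hc.mono
    intro t ht h0
    apply ht
    simp [h0]
  have hk2 : Integrable (fun t => |deriv ψ t|) :=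
    (hψ'c.integrable_of_hasCompactSupport hc').abs
  set c : ℂ := (Complex.I * ((2 * π : ℝ) : ℂ))⁻¹ with hcdef
  have hcne : Complex.I * ((2 * π : ℝ) : ℂ) ≠ 0 := by
    apply mul_ne_zero Complex.I_ne_zero
    exact_mod_cast (by positivity : (2 * π : ℝ) ≠ 0)
  have hcn : ‖c‖ = (2 * π)⁻¹ := by
    rw [hcdef, norm_inv, norm_mul, Complex.norm_I, one_mul, Complex.norm_real, Real.norm_eq_abs,
      abs_of_pos (by positivity)]
  have heq : (∫ t, E t * ((ψ t : ℝ) : ℂ)) = ∫ t, (E t * ((ψ t : ℝ) : ℂ) - c * F' t) := by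
    rw [integral_sub hGi (hF'i.const_mul c), integral_const_mul, h0]; simp
  rw [heq]
  have hRHS : 2 * (∫ t : ℝ, |ψ t| * (e ^ 2 / ((2 * X * t - Y) ^ 2 + e ^ 2)))
        + (∫ t : ℝ, |deriv ψ t|) / e =
      ∫ t : ℝ, (2 * (|ψ t| * (e ^ 2 / ((2 * X * t - Y) ^ 2 + e ^ 2))) + |deriv ψ t| / e) := by
    rw [integral_add (hk1.const_mul 2) (hk2.div_const e), integral_const_mul, integral_div]
  rw [hRHS]
  apply norm_integral_le_of_norm_le ((hk1.const_mul 2).add (hk2.div_const e))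
  refine Filter.Eventually.of_forall fun t => ?_
  have hDt := hD t
  set k : ℝ := e ^ 2 / ((2 * X * t - Y) ^ 2 + e ^ 2) with hk
  have hkpos : 0 ≤ k := by positivity
  have hpt : E t * ((ψ t : ℝ) : ℂ) - c * F' t =
      E t * ((ψ t * k : ℝ) : ℂ) - c * (E t * ((deriv ψ t * g t + ψ t * g' t : ℝ) : ℂ)) := by
    have h1 : c * (E t * (Complex.I * ((2 * π * (2 * X * t - Y) : ℝ) : ℂ)) *
      ((ψ t * g t : ℝ) : ℂ)) = E t * ((ψ t * (1 - k) : ℝ) : ℂ) := by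
      have h2 : (1 - k) = (2 * X * t - Y) * g t := by
        simp only [hk, hg]; field_simp; ring
      have h3 : c * (Complex.I * ((2 * π : ℝ) : ℂ)) = 1 := inv_mul_cancel₀ hcne
      rw [h2, Complex.ofReal_mul (2 * π)]
      push_cast at h3 ⊢
      linear_combination (E t * (2 * X * t - Y) * ψ t * g t) * h3
    simp only [hF']
    rw [mul_add, h1]
    push_cast
    ring
  rw [hpt]
  have hgb : |g t| ≤ 1 / e := by
    simp only [hg]
    rw [abs_div, abs_of_pos hDt, div_le_div_iff₀ hDt he]
    nlinarith [sq_abs (2 * X * t - Y), sq_nonneg (|2 * X * t - Y| - e), abs_nonneg (2 * X * t - Y)]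
  have hg'b : |g' t| ≤ 2 * k := by
    simp only [hg', hk]
    rw [abs_div, abs_of_pos (pow_pos hDt 2), ← mul_div_assoc, div_le_div_iff₀ (pow_pos hDt 2) hDt,
      abs_mul, abs_mul]
    have h1 : |e ^ 2 - (2 * X * t - Y) ^ 2| ≤ (2 * X * t - Y) ^ 2 + e ^ 2 := by
      rw [abs_le]; constructor <;> nlinarith [sq_nonneg (2 * X * t - Y), sq_nonneg e]
    have h2 : |X| * |e ^ 2 - (2 * X * t - Y) ^ 2| ≤ e ^ 2 * ((2 * X * t - Y) ^ 2 + e ^ 2) :=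
      mul_le_mul hX h1 (abs_nonneg _) (by positivity)
    have := mul_le_mul_of_nonneg_right h2 hDt.le
    rw [abs_of_pos (by norm_num : (0 : ℝ) < 2)]
    nlinarith
  refine (norm_sub_le _ _).trans ?_
  rw [norm_mul, norm_mul, norm_mul, hEn, hcn, Complex.norm_real, Complex.norm_real,
    Real.norm_eq_abs, Real.norm_eq_abs, one_mul, one_mul, abs_mul, abs_of_nonneg hkpos]
  have h5 : |deriv ψ t * g t + ψ t * g' t| ≤ |deriv ψ t| * (1 / e) + |ψ t| * (2 * k) := by
    refine (abs_add_le _ _).trans ?_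
    rw [abs_mul, abs_mul]
    gcongr
  have h6 : (2 * π)⁻¹ ≤ 1 / 2 := by
    rw [inv_le_comm₀ (by positivity) (by norm_num)]; norm_num; linarith
  have h7 : (2 * π)⁻¹ * |deriv ψ t * g t + ψ t * g' t| ≤
      1 / 2 * (|deriv ψ t| * (1 / e) + |ψ t| * (2 * k)) :=
    mul_le_mul h6 h5 (abs_nonneg _) (by norm_num)
  have h8 : 0 ≤ |deriv ψ t| * (1 / e) := by positivity
  have h9 : |deriv ψ t| / e = |deriv ψ t| * (1 / e) := by ring
  change _ ≤ 2 * (|ψ t| * k) + |deriv ψ t| / e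
  rw [h9]
  linarith

/-- Integral of the rescaled Cauchy kernel. -/
lemma cauchy_int (X Y e : ℝ) (he : 0 < e) (hX : X ≠ 0) :
    Integrable (fun t : ℝ => e ^ 2 / ((2 * X * t - Y) ^ 2 + e ^ 2)) ∧
    ∫ t : ℝ, e ^ 2 / ((2 * X * t - Y) ^ 2 + e ^ 2) = π * e / (2 * |X|) := by
  have ha : 2 * X / e ≠ 0 := by positivity
  have h : (fun t : ℝ => e ^ 2 / ((2 * X * t - Y) ^ 2 + e ^ 2)) =
      fun t : ℝ => (fun s : ℝ => (1 + (s - Y / e) ^ 2)⁻¹) ((2 * X / e) * t) := by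
    funext t
    have : (2 * X * t - Y) ^ 2 + e ^ 2 > 0 := by positivity
    have h2 : 1 + (2 * X / e * t - Y / e) ^ 2 > 0 := by positivity
    have h3 : e ^ 2 * (1 + (2 * X / e * t - Y / e) ^ 2) = (2 * X * t - Y) ^ 2 + e ^ 2 := by
      field_simp; ring
    simp only
    rw [← h3]
    field_simp
  rw [h]
  constructor
  · exact (integrable_inv_one_add_sq.comp_sub_right (Y / e)).comp_mul_left' ha
  · rw [Measure.integral_comp_mul_left (fun s : ℝ => (1 + (s - Y / e) ^ 2)⁻¹) (2 * X / e),
      integral_sub_right_eq_self (fun s : ℝ => (1 + s ^ 2)⁻¹) (Y / e),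
      integral_univ_inv_one_add_sq]
    rw [smul_eq_mul, abs_inv, abs_div, abs_mul, abs_of_pos he, abs_of_pos (by norm_num : (0 : ℝ) < 2)]
    have : |X| ≠ 0 := by positivity
    field_simp

lemma A_bound (ψ : ℝ → ℝ) (hψ : Continuous ψ) (hc : HasCompactSupport ψ)
    (hs : ∀ x, ψ x ≠ 0 → |x| ≤ 1) (M : ℝ) (hM : ∀ t, |ψ t| ≤ M)
    (X Y e : ℝ) (he : 0 < e) (hN : e ^ 2 = |X| + |Y|) :
    ∫ t : ℝ, |ψ t| * (e ^ 2 / ((2 * X * t - Y) ^ 2 + e ^ 2)) ≤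
      (10 * M + 10 * ∫ t, |ψ t|) / e := by
  have hM0 : 0 ≤ M := (abs_nonneg _).trans (hM 0)
  have hD : ∀ t, 0 < (2 * X * t - Y) ^ 2 + e ^ 2 := fun t => by positivity
  have hi : Integrable (fun t => |ψ t|) := (hψ.integrable_of_hasCompactSupport hc).abs
  have hI0 : 0 ≤ ∫ t, |ψ t| := integral_nonneg fun t => abs_nonneg _
  have hk1 : Integrable (fun t => |ψ t| * (e ^ 2 / ((2 * X * t - Y) ^ 2 + e ^ 2))) := by
    apply Continuous.integrable_of_hasCompactSupport
    · exact hψ.abs.mul (Continuous.div (by fun_prop) (by fun_prop) (fun t => (hD t).ne'))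
    apply hc.mono
    intro t ht h0
    apply ht
    simp [h0]
  by_cases hcase : |Y| ≤ 4 * |X|
  · have hXp : 0 < |X| := by
      by_contra h
      have : |X| = 0 := le_antisymm (not_lt.mp h) (abs_nonneg _)
      have hp := pow_pos he 2
      rw [hN, this] at hp
      linarith
    obtain ⟨h1, h2⟩ := cauchy_int X Y e he (abs_pos.mp hXp)
    have h3 : ∫ t : ℝ, |ψ t| * (e ^ 2 / ((2 * X * t - Y) ^ 2 + e ^ 2)) ≤
        ∫ t : ℝ, M * (e ^ 2 / ((2 * X * t - Y) ^ 2 + e ^ 2)) := by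
      apply integral_mono hk1 (h1.const_mul M)
      intro t
      have := hD t
      exact mul_le_mul_of_nonneg_right (hM t) (by positivity)
    refine h3.trans ?_
    rw [integral_const_mul, h2]
    have h4 : π * e / (2 * |X|) ≤ 10 / e := by
      rw [div_le_div_iff₀ (by positivity) he]
      have := Real.pi_lt_four
      nlinarith [Real.pi_pos]
    calc M * (π * e / (2 * |X|)) ≤ M * (10 / e) := by gcongr
      _ = (10 * M) / e := by ring
      _ ≤ _ := by gcongr; linarith
  · push Not at hcase
    have h3 : ∫ t : ℝ, |ψ t| * (e ^ 2 / ((2 * X * t - Y) ^ 2 + e ^ 2)) ≤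
        ∫ t : ℝ, |ψ t| * (10 / e) := by
      apply integral_mono hk1 (hi.mul_const _)
      intro t
      by_cases h0 : ψ t = 0
      · simp [h0]
      have ht := hs t h0
      refine mul_le_mul_of_nonneg_left ?_ (abs_nonneg _)
      have hDb : 2 / 5 * e ^ 2 ≤ |2 * X * t - Y| := by
        have a1 : |Y| ≤ |2 * X * t - Y| + |2 * X * t| := by
          have := abs_sub (2 * X * t) (2 * X * t - Y)
          simp only [sub_sub_cancel] at this
          linarith
        have a2 : |2 * X * t| ≤ 2 * |X| := by
          rw [abs_mul, abs_mul, abs_of_pos (by norm_num : (0 : ℝ) < 2)]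
          nlinarith [abs_nonneg X]
        rw [hN]; linarith
      have hDb2 : (2 / 5 * e ^ 2) ^ 2 ≤ (2 * X * t - Y) ^ 2 := by
        rw [← sq_abs (2 * X * t - Y)]; gcongr
      rw [div_le_div_iff₀ (hD t) he]
      -- `e ^ 3 ≤ 10 * (4/25 * e ^ 4 + e ^ 2)`
      nlinarith [mul_nonneg (pow_pos he 2).le (sq_nonneg (e - 1)), pow_pos he 2, pow_pos he 4]
    refine h3.trans ?_
    rw [integral_mul_const]
    calc (∫ t, |ψ t|) * (10 / e) = (10 * ∫ t, |ψ t|) / e := by ring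
      _ ≤ _ := by gcongr; linarith

lemma small_bound (ψ : ℝ → ℝ) (hψ : Continuous ψ) (hc : HasCompactSupport ψ)
    (hodd : ∀ x, ψ (-x) = -ψ x) (hs : ∀ x, ψ x ≠ 0 → |x| ≤ 1) (X Y : ℝ) :
    ‖∫ t : ℝ, Complex.exp (Complex.I * ((2 * π * (X * t ^ 2 - Y * t) : ℝ) : ℂ)) * ((ψ t : ℝ) : ℂ)‖
      ≤ (8 * ∫ t, |ψ t|) * (|X| + |Y|) := by
  have hi0 : Integrable ψ := hψ.integrable_of_hasCompactSupport hc
  have hi : Integrable (fun t => |ψ t|) := hi0.abs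
  have hz : ∫ t, ψ t = 0 := by
    have h := integral_neg_eq_self ψ volume
    simp only [hodd, integral_neg] at h
    linarith
  have hzc : ∫ t, ((ψ t : ℝ) : ℂ) = 0 := by
    rw [integral_complex_ofReal, hz]; simp
  have hGi : Integrable (fun t : ℝ => Complex.exp (Complex.I *
      ((2 * π * (X * t ^ 2 - Y * t) : ℝ) : ℂ)) * ((ψ t : ℝ) : ℂ)) := by
    apply Continuous.integrable_of_hasCompactSupport (by fun_prop)
    apply hc.mono
    intro t ht h0
    apply ht
    simp [h0]
  have hic : Integrable (fun t => ((ψ t : ℝ) : ℂ)) := hi0.ofReal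
  have heq := integral_sub hGi hic
  rw [hzc, sub_zero] at heq
  rw [← heq]
  have hR : (8 * ∫ t, |ψ t|) * (|X| + |Y|) = ∫ t, |ψ t| * (8 * (|X| + |Y|)) := by
    rw [integral_mul_const]; ring
  rw [hR]
  apply norm_integral_le_of_norm_le (hi.mul_const _)
  refine Filter.Eventually.of_forall fun t => ?_
  by_cases h0 : ψ t = 0
  · simp [h0]
  have ht := hs t h0
  have h1 : ∀ z w : ℂ, z * w - w = w * (z - 1) := fun z w => by ring
  have h2 : ‖Complex.exp (Complex.I * ((2 * π * (X * t ^ 2 - Y * t) : ℝ) : ℂ)) - 1‖ ≤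
      8 * (|X| + |Y|) := by
    refine (Real.norm_exp_I_mul_ofReal_sub_one_le).trans ?_
    rw [Real.norm_eq_abs, abs_mul, abs_of_pos (by positivity : 0 < 2 * π)]
    have a1 : |X * t ^ 2 - Y * t| ≤ |X| + |Y| := by
      refine (abs_sub _ _).trans ?_
      rw [abs_mul, abs_mul, abs_pow]
      have : |t| ^ 2 ≤ 1 := pow_le_one₀ (abs_nonneg _) ht
      nlinarith [abs_nonneg X, abs_nonneg Y]
    have := Real.pi_lt_four
    exact mul_le_mul (by linarith) a1 (abs_nonneg _) (by norm_num)
  have h3 := h1 (Complex.exp (Complex.I * ((2 * π * (X * t ^ 2 - Y * t) : ℝ) : ℂ))) ((ψ t : ℝ) : ℂ)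
  refine (congrArg norm h3).trans_le ?_
  rw [norm_mul, Complex.norm_real, Real.norm_eq_abs]
  gcongr

/-- Oscillatory estimate (e:Hj<): with `H_j(x,y) = ∫ e(xt² - yt) ψ_j(t) dt` and
`‖(x,y)‖_j = 2^{2j}|x| + 2^j|y|`, one has
`|H_j(x,y)| ≲ min{‖(x,y)‖_j, ‖(x,y)‖_j^{-1/2}}` uniformly in `j` and `(x,y)`. -/
theorem stmt6 (ψ : ℝ → ℝ) (hψ : ContDiff ℝ (⊤ : ℕ∞) ψ) (hodd : ∀ x, ψ (-x) = -ψ x)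
    (hsupp : ∀ x, ψ x ≠ 0 → 1 / 4 ≤ |x| ∧ |x| ≤ 1) :
    ∃ C : ℝ, 0 < C ∧ ∀ (j : ℕ) (x y : ℝ),
      ‖∫ t : ℝ, Complex.exp (Complex.I * ((2 * π * (x * t ^ 2 - y * t) : ℝ) : ℂ)) *
          (((2 : ℝ) ^ (-(j : ℤ)) * ψ ((2 : ℝ) ^ (-(j : ℤ)) * t) : ℝ) : ℂ)‖ ≤
        C * min ((2 : ℝ) ^ (2 * j) * |x| + 2 ^ j * |y|)
          (((2 : ℝ) ^ (2 * j) * |x| + 2 ^ j * |y|) ^ (-(1 / 2 : ℝ))) := by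
  have hs : ∀ x, ψ x ≠ 0 → |x| ≤ 1 := fun x hx => (hsupp x hx).2
  have hc : HasCompactSupport ψ := by
    apply HasCompactSupport.intro (isCompact_Icc (a := (-1 : ℝ)) (b := 1))
    intro x hx
    by_contra h
    exact hx (abs_le.mp (hs x h))
  obtain ⟨M, hM⟩ := hc.exists_bound_of_continuous hψ.continuous
  simp only [Real.norm_eq_abs] at hM
  have hM0 : 0 ≤ M := (abs_nonneg _).trans (hM 0)
  set I0 := ∫ t, |ψ t| with hI0
  set I1 := ∫ t, |deriv ψ t| with hI1
  have hI0p : 0 ≤ I0 := integral_nonneg fun t => abs_nonneg _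
  have hI1p : 0 ≤ I1 := integral_nonneg fun t => abs_nonneg _
  refine ⟨20 * M + 28 * I0 + I1 + 1, by positivity, fun j x y => ?_⟩
  set a : ℝ := (2 : ℝ) ^ j with ha
  have hap : 0 < a := by positivity
  have hainv : (2 : ℝ) ^ (-(j : ℤ)) = a⁻¹ := by rw [zpow_neg, zpow_natCast]
  have ha2 : (2 : ℝ) ^ (2 * j) = a ^ 2 := by rw [ha, ← pow_mul, mul_comm]
  rw [hainv, ha2]
  have hchange : (∫ t : ℝ, Complex.exp (Complex.I * ((2 * π * (x * t ^ 2 - y * t) : ℝ) : ℂ)) *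
          ((a⁻¹ * ψ (a⁻¹ * t) : ℝ) : ℂ)) =
      ∫ t : ℝ, Complex.exp (Complex.I * ((2 * π * ((a ^ 2 * x) * t ^ 2 - (a * y) * t) : ℝ) : ℂ)) *
        ((ψ t : ℝ) : ℂ) := by
    have h := Measure.integral_comp_mul_left (fun t : ℝ => Complex.exp (Complex.I *
      ((2 * π * ((a ^ 2 * x) * t ^ 2 - (a * y) * t) : ℝ) : ℂ)) * ((ψ t : ℝ) : ℂ)) a⁻¹
    rw [inv_inv, abs_of_pos hap] at h
    have h' : ∀ z w : ℂ, z = a • w → (a⁻¹ : ℝ) • z = w := by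
      intro z w hzw
      rw [hzw, smul_smul, inv_mul_cancel₀ hap.ne', one_smul]
    rw [← h' _ _ h, ← integral_smul]
    congr 1
    funext t
    have e1 : a ^ 2 * x * (a⁻¹ * t) ^ 2 - a * y * (a⁻¹ * t) = x * t ^ 2 - y * t := by
      field_simp
    rw [e1, Complex.real_smul]
    push_cast
    ring
  rw [hchange]
  have hNx : a ^ 2 * |x| = |a ^ 2 * x| := by rw [abs_mul, abs_of_pos (pow_pos hap 2)]
  have hNy : a * |y| = |a * y| := by rw [abs_mul, abs_of_pos hap]
  rw [hNx, hNy]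
  generalize a ^ 2 * x = X
  generalize a * y = Y
  have hN0 : 0 ≤ |X| + |Y| := by positivity
  have hsm := small_bound ψ hψ.continuous hc hodd hs X Y
  rcases hN0.eq_or_lt with hN | hN
  · rw [← hN] at hsm ⊢
    rw [Real.zero_rpow (by norm_num)]
    simpa using hsm
  rw [mul_min_of_nonneg _ _ (by positivity)]
  apply le_min
  · refine hsm.trans ?_
    gcongr
    linarith
  · set e := Real.sqrt (|X| + |Y|) with he
    have hep : 0 < e := Real.sqrt_pos.mpr hN
    have he2 : e ^ 2 = |X| + |Y| := Real.sq_sqrt hN0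
    have hr : (|X| + |Y|) ^ (-(1 / 2 : ℝ)) = e⁻¹ := by
      rw [Real.rpow_neg hN0, ← Real.sqrt_eq_rpow]
    rw [hr]
    have h1 := core_ibp ψ hψ hc X Y e hep (by rw [he2]; linarith [abs_nonneg Y])
    have h2 := A_bound ψ hψ.continuous hc hs M hM X Y e hep he2
    refine h1.trans ?_
    calc _ ≤ 2 * ((10 * M + 10 * I0) / e) + I1 / e := by gcongr
      _ = (20 * M + 20 * I0 + I1) * e⁻¹ := by ring
      _ ≤ _ := by gcongr ?_ * _; linarith
end
end

section
/- Let ψ be smooth, odd, supported in {1/4 ≤ |x| ≤ 1}, ψ_k(t) = 2^{-k}ψ(2^{-k}t). Fix integers k and l ≤ 0 and λ with 1 ≤ λ 2^{2k-l} < 2. Let φ be Schwartz with 1_{[-1/8,1/8]} ≤ φ̂ ≤ 1_{[-1/4,1/4]}, φ_k(t) = 2^{-k}φ(2^{-k}t), μ(k,λ,l) = ∫ e^{2πiλt²}ψ_k(t)dt, and φ_{k,λ,l}(t) = e^{2πiλt²}ψ_k(t) − μ(k,λ,l) φ_k(t). Then the Fourier transform satisfies |φ̂_{k,λ,l}(ξ)|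 ≲ min{ 2^k|ξ|, (2^k|ξ|)^{-1} } for all ξ ∈ ℝ. -/
open Real FourierTransform

noncomputable section

/-- The rescaled chirp. -/
def chirp (ψ : ℝ → ℝ) (a : ℝ) (s : ℝ) : ℂ :=
  Complex.exp (Complex.I * ((2 * π * (a * s ^ 2) : ℝ) : ℂ)) * (ψ s : ℂ)

theorem chirp_norm (ψ : ℝ → ℝ) (a s : ℝ) : ‖chirp ψ a s‖ = |ψ s| := by
  unfold chirp
  rw [norm_mul, Complex.norm_exp_I_mul_ofReal, one_mul, Complex.norm_real, Real.norm_eq_abs]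

theorem chirp_hasDerivAt (ψ : ℝ → ℝ) (hψ : ContDiff ℝ (⊤ : ℕ∞) ψ) (a s : ℝ) :
    HasDerivAt (chirp ψ a)
      (Complex.exp (Complex.I * ((2 * π * (a * s ^ 2) : ℝ) : ℂ)) *
        (Complex.I * ((4 * π * a * s * ψ s : ℝ) : ℂ) + ((deriv ψ s : ℝ) : ℂ))) s := by
  have h1 : HasDerivAt (fun s : ℝ => 2 * π * (a * s ^ 2)) (2 * π * (a * (2 * s))) s := by
    simpa using ((hasDerivAt_pow 2 s).const_mul a).const_mul (2 * π)
  have h2 := ((h1.ofReal_comp).const_mul Complex.I).cexp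
  have h3 : HasDerivAt ψ (deriv ψ s) s :=
    ((hψ.differentiable (by simp)) s).hasDerivAt
  have h4 := h2.mul h3.ofReal_comp
  refine h4.congr_deriv ?_
  push_cast
  ring

theorem chirp_contDiff (ψ : ℝ → ℝ) (hψ : ContDiff ℝ (⊤ : ℕ∞) ψ) (a : ℝ) :
    ContDiff ℝ (⊤ : ℕ∞) (chirp ψ a) := by
  unfold chirp
  have h1 : ContDiff ℝ (⊤ : ℕ∞) (fun s : ℝ => ((2 * π * (a * s ^ 2) : ℝ) : ℂ)) :=
    Complex.ofRealCLM.contDiff.comp (f := fun s : ℝ => 2 * π * (a * s ^ 2))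
      (contDiff_const.mul (contDiff_const.mul (contDiff_id.pow 2)))
  have h2 : ContDiff ℝ (⊤ : ℕ∞) (fun s : ℝ => ((ψ s : ℝ) : ℂ)) :=
    Complex.ofRealCLM.contDiff.comp hψ
  exact ((contDiff_const.mul h1).cexp).mul h2

theorem core (ψ : ℝ → ℝ) (hψ : ContDiff ℝ (⊤ : ℕ∞) ψ) (hodd : ∀ x, ψ (-x) = -ψ x)
    (hsupp : ∀ x, ψ x ≠ 0 → 1 / 4 ≤ |x| ∧ |x| ≤ 1) :
    ∃ C : ℝ, 0 < C ∧ ∀ a : ℝ, 0 ≤ a → a ≤ 2 → (∫ s, chirp ψ a s) = 0 ∧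
      ∀ η : ℝ, ‖𝓕 (chirp ψ a) η‖ ≤ C * min |η| (|η|⁻¹) := by
  have hcs : HasCompactSupport ψ := by
    refine HasCompactSupport.intro (isCompact_Icc (a := (-1 : ℝ)) (b := 1)) ?_
    intro x hx
    by_contra h
    exact hx (abs_le.mp (hsupp x h).2)
  have hi1 : MeasureTheory.Integrable (fun s => |ψ s|) :=
    (hψ.continuous.integrable_of_hasCompactSupport hcs).abs
  have hi2 : MeasureTheory.Integrable (fun s => |deriv ψ s|) :=
    ((hψ.continuous_deriv (by simp)).integrable_of_hasCompactSupport hcs.deriv).abs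
  set A := ∫ s, |ψ s| with hA
  set B := ∫ s, |deriv ψ s| with hB
  have hA0 : 0 ≤ A := MeasureTheory.integral_nonneg fun _ => abs_nonneg _
  have hB0 : 0 ≤ B := MeasureTheory.integral_nonneg fun _ => abs_nonneg _
  have hpi := Real.pi_gt_three
  refine ⟨8 * π * A + B + 1, by positivity, fun a ha0 ha2 => ?_⟩
  have hcc : HasCompactSupport (chirp ψ a) := by
    refine HasCompactSupport.intro (isCompact_Icc (a := (-1 : ℝ)) (b := 1)) ?_
    intro x hx
    by_contra h
    have : ψ x ≠ 0 := by
      intro h0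
      exact h (by simp [chirp, h0])
    exact hx (abs_le.mp (hsupp x this).2)
  have hcd := chirp_contDiff ψ hψ a
  have hgint : MeasureTheory.Integrable (chirp ψ a) :=
    hcd.continuous.integrable_of_hasCompactSupport hcc
  have hgint' : MeasureTheory.Integrable (deriv (chirp ψ a)) :=
    (hcd.continuous_deriv (by simp)).integrable_of_hasCompactSupport hcc.deriv
  have hzero : (∫ s, chirp ψ a s) = 0 := by
    have h1 := MeasureTheory.integral_neg_eq_self (chirp ψ a) MeasureTheory.volume
    have h2 : ∀ s, chirp ψ a (-s) = - chirp ψ a s := by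
      intro s
      simp [chirp, hodd]
    simp_rw [h2, MeasureTheory.integral_neg] at h1
    exact self_eq_neg.mp h1.symm
  refine ⟨hzero, fun η => ?_⟩
  have b1 : ‖𝓕 (chirp ψ a) η‖ ≤ 2 * π * |η| * A := by
    have e : 𝓕 (chirp ψ a) η
        = ∫ s, (Complex.exp (Complex.I * ((-2 * π * s * η : ℝ) : ℂ)) - 1) * chirp ψ a s := by
      have e1 : 𝓕 (chirp ψ a) η
          = ∫ s, Complex.exp (Complex.I * ((-2 * π * s * η : ℝ) : ℂ)) * chirp ψ a s := by
        rw [Real.fourier_real_eq_integral_exp_smul]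
        congr 1
        ext s
        rw [smul_eq_mul, mul_comm Complex.I]
      rw [e1]
      simp_rw [sub_mul, one_mul]
      rw [MeasureTheory.integral_sub _ hgint, hzero, sub_zero]
      refine hgint.bdd_mul (c := 1) (by fun_prop) ?_
      filter_upwards with s
      rw [Complex.norm_exp_I_mul_ofReal]
    rw [e, hA, ← MeasureTheory.integral_const_mul]
    refine MeasureTheory.norm_integral_le_of_norm_le (hi1.const_mul _) ?_
    filter_upwards with s
    rw [norm_mul, chirp_norm]
    by_cases h : ψ s = 0
    · simp [h]
    have hs := (hsupp s h).2
    gcongr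
    refine (Real.norm_exp_I_mul_ofReal_sub_one_le).trans ?_
    rw [Real.norm_eq_abs, abs_mul, abs_mul, abs_mul, abs_neg, abs_two, abs_of_pos Real.pi_pos]
    refine mul_le_mul_of_nonneg_right ?_ (abs_nonneg η)
    nlinarith
  have b2 : 2 * π * |η| * ‖𝓕 (chirp ψ a) η‖ ≤ 8 * π * A + B := by
    have e := congrFun (Real.fourier_deriv hgint (hcd.differentiable (by simp)) hgint') η
    have e2 : ‖𝓕 (deriv (chirp ψ a)) η‖ = 2 * π * |η| * ‖𝓕 (chirp ψ a) η‖ := by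
      rw [e, norm_smul]
      simp [abs_of_pos Real.pi_pos]
    rw [← e2, Real.fourier_real_eq_integral_exp_smul, hA, hB,
      ← MeasureTheory.integral_const_mul, ← MeasureTheory.integral_add (hi1.const_mul _) hi2]
    refine MeasureTheory.norm_integral_le_of_norm_le ((hi1.const_mul _).add hi2) ?_
    filter_upwards with s
    rw [norm_smul, Complex.norm_exp_ofReal_mul_I, one_mul, (chirp_hasDerivAt ψ hψ a s).deriv,
      norm_mul, Complex.norm_exp_I_mul_ofReal, one_mul]
    refine (norm_add_le _ _).trans ?_
    rw [norm_mul, Complex.norm_I, one_mul, Complex.norm_real, Complex.norm_real,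
      Real.norm_eq_abs, Real.norm_eq_abs]
    gcongr
    by_cases h : ψ s = 0
    · simp [h]
    have hs := (hsupp s h).2
    rw [abs_mul, abs_mul, abs_mul, abs_mul, abs_of_pos Real.pi_pos, abs_of_nonneg ha0]
    refine mul_le_mul_of_nonneg_right ?_ (abs_nonneg _)
    have : a * |s| ≤ 2 := by nlinarith [abs_nonneg s]
    norm_num
    nlinarith
  rw [mul_min_of_nonneg _ _ (by positivity)]
  refine le_min ?_ ?_
  · refine b1.trans ?_
    nlinarith [abs_nonneg η, mul_nonneg (abs_nonneg η) hA0, mul_nonneg (abs_nonneg η) hB0,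
      mul_nonneg (mul_nonneg (abs_nonneg η) hA0) Real.pi_pos.le]
  · rcases eq_or_ne η 0 with rfl | hη
    · simpa using b1
    · have hη' : 0 < |η| := abs_pos.mpr hη
      rw [← div_eq_mul_inv, le_div_iff₀ hη']
      have : 0 ≤ |η| * ‖𝓕 (chirp ψ a) η‖ := by positivity
      nlinarith

/-- Estimate (e:EST1) for `l ≤ 0`: with `φ_{k,λ,l}(t) = e(λt²)ψ_k(t) - μ(k,λ,l) φ_k(t)`,
one has `|φ̂_{k,λ,l}(ξ)| ≲ min{2^k|ξ|, (2^k|ξ|)⁻¹}`. -/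
theorem stmt12 (ψ : ℝ → ℝ) (hψ : ContDiff ℝ (⊤ : ℕ∞) ψ) (hodd : ∀ x, ψ (-x) = -ψ x)
    (hsupp : ∀ x, ψ x ≠ 0 → 1 / 4 ≤ |x| ∧ |x| ≤ 1)
    (φ : SchwartzMap ℝ ℂ)
    (hφre : ∀ ξ : ℝ,
      Set.indicator (Set.Icc (-(1 / 8) : ℝ) (1 / 8)) (fun _ => 1) ξ ≤ (𝓕 ⇑φ ξ).re)
    (hφim : ∀ ξ : ℝ, (𝓕 ⇑φ ξ).im = 0)
    (hφbd : ∀ ξ : ℝ,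
      ‖𝓕 ⇑φ ξ‖ ≤ Set.indicator (Set.Icc (-(1 / 4) : ℝ) (1 / 4)) (fun _ => 1) ξ) :
    ∃ C : ℝ, 0 < C ∧ ∀ (k l : ℤ) (lam : ℝ), l ≤ 0 → 0 < lam →
      1 ≤ lam * 2 ^ (2 * k - l) → lam * 2 ^ (2 * k - l) < 2 →
      ∀ ξ : ℝ,
      ‖𝓕 (fun t : ℝ =>
          Complex.exp (Complex.I * ((2 * π * (lam * t ^ 2) : ℝ) : ℂ)) *
            (((2 : ℝ) ^ (-k) * ψ ((2 : ℝ) ^ (-k) * t) : ℝ) : ℂ)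
          - (∫ s : ℝ, Complex.exp (Complex.I * ((2 * π * (lam * s ^ 2) : ℝ) : ℂ)) *
              (((2 : ℝ) ^ (-k) * ψ ((2 : ℝ) ^ (-k) * s) : ℝ) : ℂ))
            * (((2 : ℝ) ^ (-k) : ℝ) : ℂ) * φ ((2 : ℝ) ^ (-k) * t)) ξ‖ ≤
        C * min ((2 : ℝ) ^ k * |ξ|) (((2 : ℝ) ^ k * |ξ|)⁻¹) := by

  obtain ⟨C, hC, h⟩ := core ψ hψ hodd hsupp
  refine ⟨C, hC, fun k l lam hl hlam h1 h2 ξ => ?_⟩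
  set b : ℝ := (2 : ℝ) ^ (-k) with hb
  have hb0 : 0 < b := by positivity
  have hkb : (2 : ℝ) ^ k = b⁻¹ := by rw [hb, zpow_neg, inv_inv]
  have ha2 : lam * (b⁻¹) ^ 2 ≤ 2 := by
    rw [← hkb, ← zpow_natCast, ← zpow_mul]
    refine le_trans ?_ h2.le
    gcongr
    · norm_num
    · push_cast
      omega
  obtain ⟨hz, hbd⟩ := h (lam * (b⁻¹) ^ 2) (by positivity) ha2
  have hg : ∀ t : ℝ, Complex.exp (Complex.I * ((2 * π * (lam * t ^ 2) : ℝ) : ℂ)) *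
            ((b * ψ (b * t) : ℝ) : ℂ) = (b : ℂ) * chirp ψ (lam * (b⁻¹) ^ 2) (b * t) := by
    intro t
    have : lam * (b⁻¹) ^ 2 * (b * t) ^ 2 = lam * t ^ 2 := by field_simp
    unfold chirp
    rw [this]
    push_cast
    ring
  simp_rw [hg]
  have hμ : (∫ s : ℝ, (b : ℂ) * chirp ψ (lam * (b⁻¹) ^ 2) (b * s)) = 0 := by
    rw [MeasureTheory.integral_const_mul,
      MeasureTheory.Measure.integral_comp_mul_left (chirp ψ (lam * (b⁻¹) ^ 2)) b, hz]
    simp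
  rw [hμ]
  simp only [zero_mul, sub_zero]
  have hF : 𝓕 (fun t : ℝ => (b : ℂ) * chirp ψ (lam * (b⁻¹) ^ 2) (b * t)) ξ
      = 𝓕 (chirp ψ (lam * (b⁻¹) ^ 2)) (b⁻¹ * ξ) := by
    rw [Real.fourier_real_eq_integral_exp_smul, Real.fourier_real_eq_integral_exp_smul]
    have := MeasureTheory.Measure.integral_comp_mul_left (fun v : ℝ =>
      Complex.exp (((-2 * π * v * (b⁻¹ * ξ) : ℝ) : ℂ) * Complex.I) •
        chirp ψ (lam * (b⁻¹) ^ 2) v) b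
    rw [abs_of_pos (inv_pos.mpr hb0)] at this
    have h3 : ∀ X Y : ℂ, X = b⁻¹ • Y → Y = (b : ℂ) * X := by
      rintro X Y rfl
      rw [Complex.real_smul, ← mul_assoc, ← Complex.ofReal_mul, mul_inv_cancel₀ hb0.ne']
      simp
    rw [h3 _ _ this, ← MeasureTheory.integral_const_mul]
    congr 1
    ext t
    have : -2 * π * (b * t) * (b⁻¹ * ξ) = -2 * π * t * ξ := by field_simp
    rw [this, smul_eq_mul, smul_eq_mul]
    ring
  rw [hF, hkb]
  have := hbd (b⁻¹ * ξ)
  rwa [abs_mul, abs_of_pos (inv_pos.mpr hb0)] at this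
end
end

section
/- Let ψ be smooth, odd, supported in {1/4 ≤ |x| ≤ 1}, ψ_k(t) = 2^{-k}ψ(2^{-k}t), and φ Schwartz with 1_{[-1/8,1/8]} ≤ φ̂ ≤ 1_{[-1/4,1/4]}. Fix integers k, l with l > 0 and λ with 1 ≤ λ2^{2k−l} < 2. Set μ = ∫ e^{2πiλt²}ψ_k(t)dt and φ_{k,λ,l}(t) = e^{2πiλt²}ψ_k(t) − μ·φ_{k−l}(t), where φ_{k−l}(t) = 2^{l−k}φ(2^{l−k}t). Then there are constants 0 < c < 1 < C such that |φ̂_{k,λ,l}(ξ)| ≲ 2^{k−2l}|ξ| for |ξ| ≤ c2^{l−k}; |φ̂_{k,λ,l}(ξ)| ≲ 2^{−l/2} for c2^{l−k} ≤ |ξ| ≤ C2^{l−k}; and |φ̂_{k,λ,l}(ξ)| ≲ (2^k|ξ|)^{−1} for |ξ| ≥ C2^{l−k}. -/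
open Real FourierTransform

noncomputable section

namespace Stmt13

open MeasureTheory Filter Topology

/-- Smooth functions supported in the annulus. -/
def Ann (g : ℝ → ℝ) : Prop :=
  ContDiff ℝ (⊤ : ℕ∞) g ∧ ∀ x, g x ≠ 0 → 1 / 4 ≤ |x| ∧ |x| ≤ 1

/-- The oscillating factor. -/
def ph (L η s : ℝ) : ℂ := Complex.exp (Complex.I * ((2 * π * (L * s ^ 2 - η * s) : ℝ) : ℂ))

/-- The basic oscillatory integral. -/
def J (L η : ℝ) (g : ℝ → ℝ) (n : ℕ) : ℂ :=
  ∫ s : ℝ, ph L η s * ((g s / (2 * L * s - η) ^ n : ℝ) : ℂ)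

lemma norm_ph (L η s : ℝ) : ‖ph L η s‖ = 1 := by
  rw [ph, mul_comm]; exact Complex.norm_exp_ofReal_mul_I _

lemma ph_hasDerivAt (L η s : ℝ) :
    HasDerivAt (ph L η) (2 * π * Complex.I * ((2 * L * s - η : ℝ) : ℂ) * ph L η s) s := by
  have h1 : HasDerivAt (fun s : ℝ => 2 * π * (L * s ^ 2 - η * s)) (2 * π * (2 * L * s - η)) s := by
    have := (((hasDerivAt_pow 2 s).const_mul L).sub ((hasDerivAt_id s).const_mul η)).const_mul (2 * π)
    refine this.congr_deriv ?_
    simp; ring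
  have h2 := ((h1.ofReal_comp).const_mul Complex.I).cexp
  refine h2.congr_deriv ?_
  simp only [ph]; push_cast; ring

lemma ph_cont (L η : ℝ) : Continuous (ph L η) := by
  unfold ph; fun_prop

lemma isClosed_ann : IsClosed {x : ℝ | 1 / 4 ≤ |x| ∧ |x| ≤ 1} :=
  (isClosed_le continuous_const continuous_abs).inter (isClosed_le continuous_abs continuous_const)

lemma Ann.eventually_zero {g : ℝ → ℝ} (hg : Ann g) {x : ℝ} (hx : ¬ (1 / 4 ≤ |x| ∧ |x| ≤ 1)) :
    g =ᶠ[𝓝 x] 0 := by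
  have : {x : ℝ | 1 / 4 ≤ |x| ∧ |x| ≤ 1}ᶜ ∈ 𝓝 x := isClosed_ann.isOpen_compl.mem_nhds hx
  filter_upwards [this] with y hy
  by_contra h
  exact hy (hg.2 y h)

lemma Ann.deriv {g : ℝ → ℝ} (hg : Ann g) : Ann (deriv g) := by
  refine ⟨?_, ?_⟩
  · exact (contDiff_infty_iff_deriv.1 hg.1).2
  · intro x hx
    by_contra h
    apply hx
    rw [(hg.eventually_zero h).deriv_eq]
    simp

lemma Ann.id_mul {g : ℝ → ℝ} (hg : Ann g) : Ann (fun x => x * g x) :=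
  ⟨contDiff_id.mul hg.1, fun x hx => hg.2 x (right_ne_zero_of_mul hx)⟩

lemma hcs_of {E : Type*} [Zero E] {f : ℝ → E} (h : ∀ x, f x ≠ 0 → |x| ≤ 1) :
    HasCompactSupport f := by
  refine HasCompactSupport.intro (K := Set.Icc (-1) 1) isCompact_Icc ?_
  intro x hx
  by_contra h'
  exact hx (abs_le.1 (h x h'))

lemma Ann.integrable {g : ℝ → ℝ} (hg : Ann g) : Integrable g :=
  hg.1.continuous.integrable_of_hasCompactSupport (hcs_of fun x hx => (hg.2 x hx).2)

lemma quot_hasDerivAt {L η : ℝ} {g : ℝ → ℝ} (hg : Ann g)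
    (hD : ∀ s, 1 / 4 ≤ |s| ∧ |s| ≤ 1 → 2 * L * s - η ≠ 0) (n : ℕ) (s : ℝ) :
    HasDerivAt (fun s => g s / (2 * L * s - η) ^ n)
      (deriv g s / (2 * L * s - η) ^ n - 2 * L * n * (g s / (2 * L * s - η) ^ (n + 1))) s := by
  by_cases hs : 1 / 4 ≤ |s| ∧ |s| ≤ 1
  · have h0 := hD s hs
    have h1 : HasDerivAt (fun s : ℝ => 2 * L * s - η) (2 * L) s := by
      simpa using ((hasDerivAt_id s).const_mul (2 * L)).sub_const η
    have h2 : HasDerivAt g (deriv g s) s :=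
      (hg.1.differentiable (by simp)).differentiableAt.hasDerivAt
    have h3 := h2.div (h1.pow n) (pow_ne_zero n h0)
    refine h3.congr_deriv ?_
    rcases n with _ | n
    · simp
    · simp only [Pi.pow_apply, Nat.add_sub_cancel]
      push_cast
      field_simp
      ring
  · have h1 := hg.eventually_zero hs
    have h2 : (fun s => g s / (2 * L * s - η) ^ n) =ᶠ[𝓝 s] fun _ => 0 := by
      filter_upwards [h1] with y hy
      simp [hy]
    have h3 : g s = 0 := h1.eq_of_nhds
    have h4 : deriv g s = 0 := by rw [h1.deriv_eq]; simp
    rw [h3, h4]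
    simpa using (hasDerivAt_const s (0 : ℝ)).congr_of_eventuallyEq h2

lemma quot_cont {L η : ℝ} {g : ℝ → ℝ} (hg : Ann g)
    (hD : ∀ s, 1 / 4 ≤ |s| ∧ |s| ≤ 1 → 2 * L * s - η ≠ 0) (n : ℕ) :
    Continuous (fun s => g s / (2 * L * s - η) ^ n) :=
  continuous_iff_continuousAt.2 fun s => (quot_hasDerivAt hg hD n s).continuousAt

lemma J_integrable {L η : ℝ} {g : ℝ → ℝ} (hg : Ann g)
    (hD : ∀ s, 1 / 4 ≤ |s| ∧ |s| ≤ 1 → 2 * L * s - η ≠ 0) (n : ℕ) :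
    Integrable (fun s => ph L η s * ((g s / (2 * L * s - η) ^ n : ℝ) : ℂ)) := by
  refine Continuous.integrable_of_hasCompactSupport
    ((ph_cont L η).mul (Complex.continuous_ofReal.comp (quot_cont hg hD n))) (hcs_of ?_)
  intro x hx
  refine (hg.2 x ?_).2
  intro h
  apply hx
  simp [h]

lemma J_ibp {L η : ℝ} {g : ℝ → ℝ} (hg : Ann g)
    (hD : ∀ s, 1 / 4 ≤ |s| ∧ |s| ≤ 1 → 2 * L * s - η ≠ 0) (n : ℕ) :
    2 * π * Complex.I * J L η g n + J L η (deriv g) (n + 1)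
      - 2 * L * (n + 1) * J L η g (n + 2) = 0 := by
  have key : ∫ s : ℝ, ((2 * π * Complex.I) * (ph L η s * ((g s / (2 * L * s - η) ^ n : ℝ) : ℂ))
      + ph L η s * ((deriv g s / (2 * L * s - η) ^ (n + 1) : ℝ) : ℂ)
      - (2 * L * (n + 1)) * (ph L η s * ((g s / (2 * L * s - η) ^ (n + 2) : ℝ) : ℂ))) = 0 := by
    refine integral_eq_zero_of_hasDerivAt_of_integrable
      (f := fun s => ph L η s * ((g s / (2 * L * s - η) ^ (n + 1) : ℝ) : ℂ)) ?_ ?_ ?_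
    · intro s
      have h := (ph_hasDerivAt L η s).mul (quot_hasDerivAt hg hD (n + 1) s).ofReal_comp
      refine h.congr_deriv ?_
      have h5 : g s / (2 * L * s - η) ^ n = (2 * L * s - η) * (g s / (2 * L * s - η) ^ (n + 1)) := by
        by_cases hs : g s = 0
        · simp [hs]
        · have := hD s (hg.2 s hs)
          field_simp
          ring
      rw [h5]
      push_cast
      ring
    · exact (((J_integrable hg hD n).const_mul _).add (J_integrable hg.deriv hD (n + 1))).sub
        ((J_integrable hg hD (n + 2)).const_mul _)
    · exact J_integrable hg hD (n + 1)
  have i1 := (J_integrable hg hD n).const_mul (2 * π * Complex.I)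
  have i2 := J_integrable hg.deriv hD (n + 1)
  have i3 := (J_integrable hg hD (n + 2)).const_mul (2 * L * (n + 1) : ℂ)
  have e1 := integral_sub (i1.add i2) i3
  have e2 := integral_add i1 i2
  simp only [Pi.add_apply] at e1
  rw [e1, e2, integral_const_mul, integral_const_mul] at key
  exact key

/-- L1 norm. -/
def N1 (g : ℝ → ℝ) : ℝ := ∫ s, |g s|

lemma N1_nonneg (g : ℝ → ℝ) : 0 ≤ N1 g := integral_nonneg fun _ => abs_nonneg _

lemma J_bound {L η m : ℝ} {g : ℝ → ℝ} (hg : Ann g) (hm : 0 < m)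
    (hD : ∀ s, 1 / 4 ≤ |s| ∧ |s| ≤ 1 → m ≤ |2 * L * s - η|) (n : ℕ) :
    ‖J L η g n‖ ≤ N1 g / m ^ n := by
  rw [N1, ← integral_div]
  refine norm_integral_le_of_norm_le (hg.integrable.abs.div_const _) (Eventually.of_forall ?_)
  intro s
  rw [norm_mul, norm_ph, one_mul, Complex.norm_real, Real.norm_eq_abs, abs_div, abs_pow]
  by_cases hs : g s = 0
  · simp [hs]
  · have := hD s (hg.2 s hs)
    gcongr

lemma J_step {L η m : ℝ} {g : ℝ → ℝ} (hg : Ann g) (hm : 0 < m) (hL : 0 ≤ L)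
    (hD : ∀ s, 1 / 4 ≤ |s| ∧ |s| ≤ 1 → m ≤ |2 * L * s - η|) (n : ℕ) :
    ‖J L η g n‖ ≤ ‖J L η (deriv g) (n + 1)‖ + 2 * L * (n + 1) * ‖J L η g (n + 2)‖ := by
  have h := J_ibp hg (fun s hs => abs_pos.1 (hm.trans_le (hD s hs))) n
  have h1 : 2 * π * Complex.I * J L η g n =
      2 * L * (n + 1) * J L η g (n + 2) - J L η (deriv g) (n + 1) := by
    linear_combination h
  have h2 : ‖2 * π * Complex.I * J L η g n‖ = 2 * π * ‖J L η g n‖ := by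
    simp [abs_of_pos Real.pi_pos]
  have h3 : ‖2 * L * (n + 1) * J L η g (n + 2)‖ = 2 * L * (n + 1) * ‖J L η g (n + 2)‖ := by
    have : (2 * L * (n + 1) : ℂ) = ((2 * L * (n + 1) : ℝ) : ℂ) := by push_cast; ring
    rw [this, norm_mul, Complex.norm_real, Real.norm_of_nonneg (by positivity)]
  have h4 := norm_sub_le (2 * L * (n + 1) * J L η g (n + 2)) (J L η (deriv g) (n + 1))
  rw [← h1, h2, h3] at h4
  have h5 : ‖J L η g n‖ ≤ 2 * π * ‖J L η g n‖ := by
    have := Real.pi_gt_three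
    nlinarith [norm_nonneg (J L η g n)]
  linarith

/-- Outer range. -/
lemma outer {L η : ℝ} {g : ℝ → ℝ} (hg : Ann g) (hL : 0 ≤ L) (hη : 4 * L ≤ |η|) (h0 : 0 < |η|) :
    ‖J L η g 0‖ ≤ (2 * N1 (deriv g) + 2 * N1 g) / |η| := by
  have hD : ∀ s, 1 / 4 ≤ |s| ∧ |s| ≤ 1 → |η| / 2 ≤ |2 * L * s - η| := by
    intro s hs
    have h1 : |2 * L * s| ≤ |η| / 2 := by
      rw [abs_mul, abs_of_nonneg (by positivity : 0 ≤ 2 * L)]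
      nlinarith [hs.2]
    have := abs_sub_abs_le_abs_sub η (2 * L * s)
    rw [abs_sub_comm η] at this
    linarith
  have h1 := J_step hg (half_pos h0) hL hD 0
  have h2 := J_bound hg.deriv (half_pos h0) hD 1
  have h3 := J_bound hg (half_pos h0) hD 2
  have n0 := N1_nonneg g
  calc _ ≤ _ := h1
    _ ≤ N1 (deriv g) / (|η| / 2) ^ 1 + 2 * (|η| / 4) * (((0 : ℕ) : ℝ) + 1) * (N1 g / (|η| / 2) ^ 2) := by
      simp only [zero_add] at *
      gcongr
      linarith
    _ = _ := by
      field_simp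
      simp
      ring

/-- Inner range, derivative bound. -/
lemma inner {L η M : ℝ} {g : ℝ → ℝ} (hg : Ann g) (hM : 0 < M) (hL : M ≤ L) (hL' : L ≤ 2 * M)
    (hη : |η| ≤ M / 4) :
    ‖J L η g 0‖ ≤ (16 * N1 (deriv (deriv g)) + 1024 * N1 (deriv g) + 20000 * N1 g) / M ^ 2 := by
  have hL0 : 0 ≤ L := hM.le.trans hL
  have hD : ∀ s, 1 / 4 ≤ |s| ∧ |s| ≤ 1 → M / 4 ≤ |2 * L * s - η| := by
    intro s hs
    have h1 : M / 2 ≤ |2 * L * s| := by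
      rw [abs_mul, abs_of_nonneg (by positivity : 0 ≤ 2 * L)]
      nlinarith [hs.1]
    have := abs_sub_abs_le_abs_sub (2 * L * s) η
    linarith
  have hm : 0 < M / 4 := by positivity
  have a1 := J_step hg hm hL0 hD 0
  have a2 := J_step hg.deriv hm hL0 hD 1
  have a3 := J_step hg hm hL0 hD 2
  have b1 := J_bound hg.deriv.deriv hm hD 2
  have b2 := J_bound hg.deriv hm hD 3
  have b3 := J_bound hg hm hD 4
  norm_num at a1 a2 a3
  have n0 := N1_nonneg g
  have n1 := N1_nonneg (deriv g)
  calc ‖J L η g 0‖ ≤ ‖J L η (deriv g) 1‖ + 2 * L * ‖J L η g 2‖ := a1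
    _ ≤ (‖J L η (deriv (deriv g)) 2‖ + 2 * L * 2 * ‖J L η (deriv g) 3‖) +
        2 * L * (‖J L η (deriv g) 3‖ + 2 * L * 3 * ‖J L η g 4‖) := by
      gcongr
    _ ≤ (N1 (deriv (deriv g)) / (M / 4) ^ 2 + 2 * (2 * M) * 2 * (N1 (deriv g) / (M / 4) ^ 3)) +
        2 * (2 * M) * (N1 (deriv g) / (M / 4) ^ 3 + 2 * (2 * M) * 3 * (N1 g / (M / 4) ^ 4)) := by
      gcongr
    _ = (16 * N1 (deriv (deriv g)) + 768 * N1 (deriv g) + 12288 * N1 g) / M ^ 2 := by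
      field_simp
      ring
    _ ≤ _ := by
      gcongr <;> norm_num

lemma gauss_fourier_bound {b : ℂ} (hb : 0 < b.re) (η x : ℝ) :
    ‖𝓕 (fun s : ℝ => Complex.exp (-π * b * s ^ 2 + 2 * π * (-Complex.I * η) * s)) x‖
      ≤ ‖b‖ ^ (-(1 / 2 : ℝ)) := by
  rw [fourier_gaussian_pi' hb]
  have hb0 : b ≠ 0 := by rintro rfl; simp at hb
  have h1 : ‖(1 : ℂ) / b ^ (1 / 2 : ℂ)‖ = ‖b‖ ^ (-(1 / 2 : ℝ)) := by
    have : (1 / 2 : ℂ) = ((1 / 2 : ℝ) : ℂ) := by push_cast; rfl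
    rw [norm_div, norm_one, this, Complex.norm_cpow_real, Real.rpow_neg (norm_nonneg _), one_div]
  have h2 : ‖Complex.exp (-π / b * (x + Complex.I * (-Complex.I * η)) ^ 2)‖ ≤ 1 := by
    rw [Complex.norm_exp]
    apply Real.exp_le_one_iff.2
    have : (-π / b * (x + Complex.I * (-Complex.I * η)) ^ 2 : ℂ)
        = ((-π * (x + η) ^ 2 : ℝ) : ℂ) * b⁻¹ := by
      have : Complex.I * (-Complex.I * η) = η := by
        rw [← mul_assoc, mul_neg, Complex.I_mul_I]; simp
      rw [this]; push_cast; field_simp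
    rw [this, Complex.re_ofReal_mul, Complex.inv_re]
    have h3 : 0 ≤ b.re / Complex.normSq b := div_nonneg hb.le (Complex.normSq_nonneg _)
    have h4 : 0 ≤ π * (x + η) ^ 2 := by positivity
    nlinarith
  rw [norm_mul, h1]
  exact mul_le_of_le_one_right (by positivity) h2

lemma parseval (H : SchwartzMap ℝ ℂ) {G : ℝ → ℂ} (hG : Integrable G) :
    ∫ s, 𝓕 (⇑H) s * G s = ∫ x, H x * 𝓕 G x := by
  have := VectorFourier.integral_fourierIntegral_smul_eq_flip (μ := volume) (ν := volume)
    (L := innerₗ ℝ) Real.continuous_fourierChar continuous_inner (H.integrable (μ := volume)) hG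
  simpa using! this

lemma middle {g : ℝ → ℝ} (hg : Ann g) : ∃ K : ℝ, 0 ≤ K ∧ ∀ L η : ℝ, 0 < L →
    ‖J L η g 0‖ ≤ K * L ^ (-(1 / 2 : ℝ)) := by
  have hcs : HasCompactSupport (fun x => (g x : ℂ)) :=
    hcs_of fun x hx => (hg.2 x (by simpa using hx)).2
  let G : SchwartzMap ℝ ℂ := hcs.toSchwartzMap (Complex.ofRealCLM.contDiff.comp hg.1)
  let H : SchwartzMap ℝ ℂ := 𝓕⁻ G
  have hH : 𝓕 (⇑H) = fun x => (g x : ℂ) := by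
    rw [← SchwartzMap.fourier_coe]
    have : 𝓕 H = G := FourierTransform.fourier_fourierInv_eq G
    rw [this]; rfl
  have hHi : Integrable (⇑H) := H.integrable
  refine ⟨∫ x, ‖H x‖, integral_nonneg fun _ => norm_nonneg _, fun L η hL => ?_⟩
  let b : ℕ → ℂ := fun n => ((1 / ((n : ℝ) + 1) : ℝ) : ℂ) - 2 * L * Complex.I
  have hbre : ∀ n, (b n).re = 1 / ((n : ℝ) + 1) := fun n => by simp [b, -one_div, -Complex.ofReal_div]
  have hbpos : ∀ n, 0 < (b n).re := fun n => by rw [hbre]; positivity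
  have hbn : ∀ n, L ≤ ‖b n‖ := by
    intro n
    have h1 := Complex.abs_im_le_norm (b n)
    have h2 : (b n).im = - (2 * L) := by simp [b, -one_div, -Complex.ofReal_div]
    rw [h2, abs_neg, abs_of_pos (by positivity)] at h1
    linarith
  let E : ℕ → ℝ → ℂ := fun n s =>
    Complex.exp (-π * b n * s ^ 2 + 2 * π * (-Complex.I * η) * s)
  have hE : ∀ n s, E n s = ((Real.exp (-π * (1 / ((n : ℝ) + 1)) * s ^ 2) : ℝ) : ℂ) * ph L η s := by
    intro n s
    simp only [E, ph, b]
    rw [Complex.ofReal_exp, ← Complex.exp_add]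
    congr 1
    push_cast
    ring
  have hEi : ∀ n, Integrable (E n) := by
    intro n
    have := integrable_cexp_quadratic (b := π * b n)
      (by rw [Complex.re_ofReal_mul]; exact mul_pos Real.pi_pos (hbpos n))
      (2 * π * (-Complex.I * η)) 0
    simpa [E] using this
  have hbd : ∀ n, ‖∫ s, (g s : ℂ) * E n s‖ ≤ (∫ x, ‖H x‖) * L ^ (-(1 / 2 : ℝ)) := by
    intro n
    have h1 := parseval H (hEi n)
    rw [hH] at h1
    rw [h1, ← integral_mul_const]
    refine norm_integral_le_of_norm_le (hHi.norm.mul_const _) (Eventually.of_forall fun x => ?_)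
    rw [norm_mul]
    refine mul_le_mul_of_nonneg_left ?_ (norm_nonneg _)
    refine (gauss_fourier_bound (hbpos n) η x).trans ?_
    exact Real.rpow_le_rpow_of_nonpos hL (hbn n) (by norm_num)
  have hlim : Tendsto (fun n => ∫ s, (g s : ℂ) * E n s) atTop (𝓝 (∫ s, (g s : ℂ) * ph L η s)) := by
    refine tendsto_integral_of_dominated_convergence (fun s => |g s|) ?_ hg.integrable.abs ?_ ?_
    · intro n
      refine Continuous.aestronglyMeasurable ?_
      have := hg.1.continuous
      simp only [E]
      fun_prop
    · intro n
      refine Eventually.of_forall fun s => ?_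
      rw [hE, norm_mul, norm_mul, norm_ph, Complex.norm_real, Complex.norm_real, Real.norm_eq_abs,
        Real.norm_eq_abs, Real.abs_exp, mul_one]
      refine mul_le_of_le_one_right (abs_nonneg _) (Real.exp_le_one_iff.2 ?_)
      have : 0 ≤ π * (1 / ((n : ℝ) + 1)) * s ^ 2 := by positivity
      linarith
    · refine Eventually.of_forall fun s => ?_
      refine Tendsto.const_mul _ ?_
      have h1 : Tendsto (fun n : ℕ => Real.exp (-π * (1 / ((n : ℝ) + 1)) * s ^ 2)) atTop (𝓝 1) := by
        have := ((tendsto_one_div_add_atTop_nhds_zero_nat (𝕜 := ℝ)).const_mul (-π)).mul_const (s ^ 2)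
        simpa [Function.comp_def] using (Real.continuous_exp.tendsto _).comp this
      have h2 := ((Complex.continuous_ofReal.tendsto _).comp h1).mul_const (ph L η s)
      rw [Complex.ofReal_one, one_mul] at h2
      exact h2.congr fun n => (hE n s).symm
  have hJ : J L η g 0 = ∫ s, (g s : ℂ) * ph L η s := by
    simp [J, mul_comm]
  rw [hJ]
  exact le_of_tendsto hlim.norm (Eventually.of_forall hbd)

/-- The normalized function. -/
def nf (L : ℝ) (g : ℝ → ℝ) (s : ℝ) : ℂ := ph L 0 s * (g s : ℂ)

lemma fourier_nf (L η : ℝ) (g : ℝ → ℝ) : 𝓕 (nf L g) η = J L η g 0 := by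
  rw [Real.fourier_real_eq_integral_exp_smul, J]
  congr 1
  ext s
  simp only [nf, ph, smul_eq_mul, pow_zero, div_one]
  rw [← mul_assoc, ← Complex.exp_add]
  congr 2
  push_cast
  ring

lemma nf_integrable (L : ℝ) {g : ℝ → ℝ} (hg : Ann g) : Integrable (nf L g) := by
  refine Continuous.integrable_of_hasCompactSupport
    ((ph_cont L 0).mul (Complex.continuous_ofReal.comp hg.1.continuous)) (hcs_of ?_)
  intro x hx
  refine (hg.2 x ?_).2
  intro h
  apply hx
  simp [nf, h]

lemma J_zero_of_odd (L : ℝ) {g : ℝ → ℝ} (hodd : ∀ x, g (-x) = - g x) : J L 0 g 0 = 0 := by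
  have h := integral_neg_eq_self (fun s : ℝ => ph L 0 s * ((g s / (2 * L * s - 0) ^ 0 : ℝ) : ℂ)) volume
  have h2 : ∀ s : ℝ, ph L 0 (-s) * ((g (-s) / (2 * L * (-s) - 0) ^ 0 : ℝ) : ℂ)
      = - (ph L 0 s * ((g s / (2 * L * s - 0) ^ 0 : ℝ) : ℂ)) := by
    intro s
    simp [ph, hodd]
  simp only [h2] at h
  rw [integral_neg] at h
  have h3 : - J L 0 g 0 = J L 0 g 0 := h
  exact self_eq_neg.1 h3.symm

lemma inner' {g : ℝ → ℝ} (hg : Ann g) (hodd : ∀ x, g (-x) = - g x) : ∃ K : ℝ, 0 ≤ K ∧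
    ∀ L η M : ℝ, 0 < M → M ≤ L → L ≤ 2 * M → |η| ≤ M / 4 → ‖J L η g 0‖ ≤ K / M ^ 2 * |η| := by
  let h : ℝ → ℝ := fun x => x * g x
  have hh : Ann h := hg.id_mul
  let K0 := 16 * N1 (deriv (deriv h)) + 1024 * N1 (deriv h) + 20000 * N1 h
  have hK0 : 0 ≤ K0 := by
    have := N1_nonneg h
    have := N1_nonneg (deriv h)
    have := N1_nonneg (deriv (deriv h))
    positivity
  refine ⟨2 * π * K0, by positivity, fun L η M hM hL hL' hη => ?_⟩
  have hx : (fun x : ℝ => x • nf L g x) = nf L h := by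
    ext x; simp [nf, h]; ring
  have hd : ∀ w, HasDerivAt (𝓕 (nf L g)) ((-2 * π * Complex.I) * J L w h 0) w := by
    intro w
    have h1 := Real.hasDerivAt_fourier (nf_integrable L hg) (by rw [hx]; exact nf_integrable L hh) w
    refine h1.congr_deriv ?_
    rw [← fourier_nf, Real.fourier_real_eq_integral_exp_smul, Real.fourier_real_eq_integral_exp_smul,
      ← integral_const_mul]
    congr 1
    ext s
    simp [nf, h]; ring
  have := Convex.norm_image_sub_le_of_norm_hasDerivWithin_le (s := Set.Icc (-(M / 4)) (M / 4))
    (C := 2 * π * (K0 / M ^ 2)) (x := 0) (y := η)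
    (fun w _ => (hd w).hasDerivWithinAt) (fun w hw => by
      rw [norm_mul]
      have : ‖(-2 * π * Complex.I : ℂ)‖ = 2 * π := by simp [abs_of_pos Real.pi_pos]
      rw [this]
      exact mul_le_mul_of_nonneg_left (inner hh hM hL hL' (abs_le.2 hw)) (by positivity))
    (convex_Icc _ _) ⟨by linarith, by linarith⟩ (abs_le.1 hη)
  rw [fourier_nf, fourier_nf, J_zero_of_odd L hodd, sub_zero, sub_zero, Real.norm_eq_abs] at this
  refine this.trans (le_of_eq ?_)
  ring

/-- Removal of the mean and rescaling. -/
lemma reduce {ψ : ℝ → ℝ} (hodd : ∀ x, ψ (-x) = -ψ x) (φ : SchwartzMap ℝ ℂ) (k l : ℤ)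
    (lam ξ : ℝ) :
    𝓕 (fun t : ℝ =>
            Complex.exp (Complex.I * ((2 * π * (lam * t ^ 2) : ℝ) : ℂ)) *
              (((2 : ℝ) ^ (-k) * ψ ((2 : ℝ) ^ (-k) * t) : ℝ) : ℂ)
            - (∫ s : ℝ, Complex.exp (Complex.I * ((2 * π * (lam * s ^ 2) : ℝ) : ℂ)) *
                (((2 : ℝ) ^ (-k) * ψ ((2 : ℝ) ^ (-k) * s) : ℝ) : ℂ))
              * (((2 : ℝ) ^ (l - k) : ℝ) : ℂ) * φ ((2 : ℝ) ^ (l - k) * t)) ξ =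
      J (lam * (2 ^ k) ^ 2) (2 ^ k * ξ) ψ 0 := by
  have hmu : (∫ s : ℝ, Complex.exp (Complex.I * ((2 * π * (lam * s ^ 2) : ℝ) : ℂ)) *
                (((2 : ℝ) ^ (-k) * ψ ((2 : ℝ) ^ (-k) * s) : ℝ) : ℂ)) = 0 := by
    have h := J_zero_of_odd lam (g := fun s => (2 : ℝ) ^ (-k) * ψ ((2 : ℝ) ^ (-k) * s))
      (fun x => by rw [mul_neg, hodd]; ring)
    rw [← h, J]
    simp [ph]
  rw [hmu]
  simp only [zero_mul, sub_zero]
  have hk : (0 : ℝ) < 2 ^ k := by positivity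
  rw [Real.fourier_real_eq_integral_exp_smul, J]
  have h := Measure.integral_comp_mul_left (fun s => ph (lam * (2 ^ k) ^ 2) (2 ^ k * ξ) s *
    ((ψ s / (2 * (lam * (2 ^ k) ^ 2) * s - 2 ^ k * ξ) ^ 0 : ℝ) : ℂ)) ((2 : ℝ) ^ (-k))
  rw [zpow_neg, inv_inv, abs_of_pos hk] at h
  have h2 : ∀ X Y : ℂ, X = ((2 : ℝ) ^ k) • Y → Y = (((2 : ℝ) ^ k)⁻¹ : ℝ) • X := by
    rintro X Y rfl
    rw [smul_smul, inv_mul_cancel₀ hk.ne', one_smul]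
  rw [h2 _ _ h, ← integral_smul]
  congr 1
  ext t
  have e1 : lam * (2 ^ k) ^ 2 * (((2 : ℝ) ^ k)⁻¹ * t) ^ 2 - 2 ^ k * ξ * (((2 : ℝ) ^ k)⁻¹ * t)
      = lam * t ^ 2 - t * ξ := by
    field_simp
  simp only [ph, e1, zpow_neg, smul_eq_mul, pow_zero, div_one, Complex.real_smul]
  rw [← mul_assoc, ← Complex.exp_add]
  rw [Complex.ofReal_mul (((2 : ℝ) ^ k)⁻¹)]
  rw [mul_left_comm]
  congr 3
  push_cast
  ring

end Stmt13

/-- Estimate (e:EST2) for `l > 0`: with `φ_{k,λ,l}(t) = e(λt²)ψ_k(t) - μ φ_{k-l}(t)`, there are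
constants `0 < c < 1 < C` with `|φ̂_{k,λ,l}(ξ)| ≲ 2^{k-2l}|ξ|` for `|ξ| ≤ c2^{l-k}`,
`≲ 2^{-l/2}` for `c2^{l-k} ≤ |ξ| ≤ C2^{l-k}`, and `≲ (2^k|ξ|)⁻¹` for `|ξ| ≥ C2^{l-k}`. -/
theorem stmt13 (ψ : ℝ → ℝ) (hψ : ContDiff ℝ (⊤ : ℕ∞) ψ) (hodd : ∀ x, ψ (-x) = -ψ x)
    (hsupp : ∀ x, ψ x ≠ 0 → 1 / 4 ≤ |x| ∧ |x| ≤ 1)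
    (φ : SchwartzMap ℝ ℂ)
    (hφre : ∀ ξ : ℝ,
      Set.indicator (Set.Icc (-(1 / 8) : ℝ) (1 / 8)) (fun _ => 1) ξ ≤ (𝓕 ⇑φ ξ).re)
    (hφim : ∀ ξ : ℝ, (𝓕 ⇑φ ξ).im = 0)
    (hφbd : ∀ ξ : ℝ,
      ‖𝓕 ⇑φ ξ‖ ≤ Set.indicator (Set.Icc (-(1 / 4) : ℝ) (1 / 4)) (fun _ => 1) ξ) :
    ∃ c C K : ℝ, 0 < c ∧ c < 1 ∧ 1 < C ∧ 0 < K ∧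
      ∀ (k l : ℤ) (lam : ℝ), 0 < l → 0 < lam →
      1 ≤ lam * 2 ^ (2 * k - l) → lam * 2 ^ (2 * k - l) < 2 →
      ∀ ξ : ℝ,
      (|ξ| ≤ c * 2 ^ (l - k) →
        ‖𝓕 (fun t : ℝ =>
            Complex.exp (Complex.I * ((2 * π * (lam * t ^ 2) : ℝ) : ℂ)) *
              (((2 : ℝ) ^ (-k) * ψ ((2 : ℝ) ^ (-k) * t) : ℝ) : ℂ)
            - (∫ s : ℝ, Complex.exp (Complex.I * ((2 * π * (lam * s ^ 2) : ℝ) : ℂ)) *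
                (((2 : ℝ) ^ (-k) * ψ ((2 : ℝ) ^ (-k) * s) : ℝ) : ℂ))
              * (((2 : ℝ) ^ (l - k) : ℝ) : ℂ) * φ ((2 : ℝ) ^ (l - k) * t)) ξ‖ ≤
          K * 2 ^ (k - 2 * l) * |ξ|) ∧
      (c * 2 ^ (l - k) ≤ |ξ| → |ξ| ≤ C * 2 ^ (l - k) →
        ‖𝓕 (fun t : ℝ =>
            Complex.exp (Complex.I * ((2 * π * (lam * t ^ 2) : ℝ) : ℂ)) *
              (((2 : ℝ) ^ (-k) * ψ ((2 : ℝ) ^ (-k) * t) : ℝ) : ℂ)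
            - (∫ s : ℝ, Complex.exp (Complex.I * ((2 * π * (lam * s ^ 2) : ℝ) : ℂ)) *
                (((2 : ℝ) ^ (-k) * ψ ((2 : ℝ) ^ (-k) * s) : ℝ) : ℂ))
              * (((2 : ℝ) ^ (l - k) : ℝ) : ℂ) * φ ((2 : ℝ) ^ (l - k) * t)) ξ‖ ≤
          K * ((2 : ℝ) ^ (l : ℤ)) ^ (-(1 / 2 : ℝ))) ∧
      (C * 2 ^ (l - k) ≤ |ξ| →
        ‖𝓕 (fun t : ℝ =>
            Complex.exp (Complex.I * ((2 * π * (lam * t ^ 2) : ℝ) : ℂ)) *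
              (((2 : ℝ) ^ (-k) * ψ ((2 : ℝ) ^ (-k) * t) : ℝ) : ℂ)
            - (∫ s : ℝ, Complex.exp (Complex.I * ((2 * π * (lam * s ^ 2) : ℝ) : ℂ)) *
                (((2 : ℝ) ^ (-k) * ψ ((2 : ℝ) ^ (-k) * s) : ℝ) : ℂ))
              * (((2 : ℝ) ^ (l - k) : ℝ) : ℂ) * φ ((2 : ℝ) ^ (l - k) * t)) ξ‖ ≤
          K * ((2 : ℝ) ^ k * |ξ|)⁻¹) := by
  have hA : Stmt13.Ann ψ := ⟨hψ, hsupp⟩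
  obtain ⟨K1, hK1, h1⟩ := Stmt13.inner' hA hodd
  obtain ⟨K2, hK2, h2⟩ := Stmt13.middle hA
  have n0 := Stmt13.N1_nonneg ψ
  have n1 := Stmt13.N1_nonneg (deriv ψ)
  set K3 := 2 * Stmt13.N1 (deriv ψ) + 2 * Stmt13.N1 ψ with hK3
  have hK3' : 0 ≤ K3 := by positivity
  refine ⟨1 / 4, 8, K1 + K2 + K3 + 1, by norm_num, by norm_num, by norm_num, by positivity, ?_⟩
  intro k l lam hl hlam hlo hhi ξ
  rw [Stmt13.reduce hodd]
  have hk : (0 : ℝ) < 2 ^ k := by positivity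
  have hM : (0 : ℝ) < 2 ^ l := by positivity
  set M : ℝ := 2 ^ l with hMdef
  set a : ℝ := 2 ^ k with hadef
  have e1 : (2 : ℝ) ^ (l - k) = M / a := zpow_sub₀ (by norm_num) _ _
  have e2 : (2 : ℝ) ^ (k - 2 * l) = a / M ^ 2 := by
    rw [zpow_sub₀ (by norm_num), mul_comm 2 l, zpow_mul]; rfl
  have e3 : (2 : ℝ) ^ (2 * k - l) = a ^ 2 / M := by
    rw [zpow_sub₀ (by norm_num), mul_comm 2 k, zpow_mul]; rfl
  rw [e3, ← mul_div_assoc] at hlo hhi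
  rw [le_div_iff₀ hM, one_mul] at hlo
  rw [div_lt_iff₀ hM] at hhi
  rw [e1, e2]
  have hη : |a * ξ| = a * |ξ| := by rw [abs_mul, abs_of_pos hk]
  have hL : 0 < lam * a ^ 2 := by positivity
  refine ⟨fun h => ?_, fun _ _ => ?_, fun h => ?_⟩
  · have h3 : a * |ξ| ≤ M / 4 := by
      have := mul_le_mul_of_nonneg_left h hk.le
      calc _ ≤ _ := this
        _ = _ := by field_simp
    refine (h1 (lam * a ^ 2) (a * ξ) M hM hlo hhi.le (by rw [hη]; exact h3)).trans ?_
    rw [hη]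
    have : K1 / M ^ 2 * (a * |ξ|) = K1 * (a / M ^ 2) * |ξ| := by ring
    rw [this]
    gcongr
    linarith
  · refine (h2 (lam * a ^ 2) (a * ξ) hL).trans ?_
    have : (lam * a ^ 2) ^ (-(1 / 2 : ℝ)) ≤ M ^ (-(1 / 2 : ℝ)) :=
      Real.rpow_le_rpow_of_nonpos hM hlo (by norm_num)
    gcongr
    linarith
  · have h3 : 8 * M ≤ a * |ξ| := by
      have := mul_le_mul_of_nonneg_left h hk.le
      calc 8 * M = a * (8 * (M / a)) := by field_simp
        _ ≤ _ := this
    have h4 : 0 < a * |ξ| := by linarith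
    have := Stmt13.outer (L := lam * a ^ 2) (η := a * ξ) hA hL.le (by rw [hη]; linarith)
      (by rw [hη]; exact h4)
    refine this.trans ?_
    rw [hη, div_eq_mul_inv, ← hK3]
    refine mul_le_mul_of_nonneg_right ?_ (by positivity)
    linarith
end
end

section
/- Fix 0 < ε < 1/7 and an integer j ≥ 1. Let 𝔐_j = ⋃_{(A,B,Q)=1, Q ≤ 2^{6jε}} {(λ,β) ∈ 𝕋² : |λ − A/Q| ≤ 2^{(ε−2)j}, |β − B/Q| ≤ 2^{(ε−1)j}}. Then there is δ = δ(ε) > 0 such that for all (λ,β) ∉ 𝔐_j, the sum M_j(λ,β) = ∑_{m∈ℤ} e^{2πi(λm² − βm)} ψ_j(m) satisfies |M_j(λ,β)| ≲ 2^{−δj}, where ψ_j(t) = 2^{−j}ψ(2^{−j}t) with ψ smooth and supported in {1/4 ≤ |x| ≤ 1}. -/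
open Real

noncomputable section

def ee (x : ℝ) : ℂ := Complex.exp (Complex.I * ((2 * π * x : ℝ) : ℂ))

lemma ee_add (x y : ℝ) : ee (x + y) = ee x * ee y := by
  unfold ee
  rw [← Complex.exp_add]
  congr 1
  push_cast
  ring

lemma norm_ee (x : ℝ) : ‖ee x‖ = 1 := by
  unfold ee
  rw [mul_comm]
  exact Complex.norm_exp_ofReal_mul_I _

lemma ee_int (n : ℤ) : ee n = 1 := by
  unfold ee
  rw [Complex.exp_eq_one_iff]
  exact ⟨n, by push_cast; ring⟩

lemma ee_conj (x : ℝ) : (starRingEnd ℂ) (ee x) = ee (-x) := by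
  unfold ee
  rw [← Complex.exp_conj]
  congr 1
  rw [map_mul, Complex.conj_I, Complex.conj_ofReal]
  push_cast
  ring

lemma ee_sub_le (x y : ℝ) : ‖ee x - ee y‖ ≤ 7 * |x - y| := by
  have h : ee x - ee y = ee y * (ee (x - y) - 1) := by
    rw [mul_sub, ← ee_add]; simp
  rw [h, norm_mul, norm_ee, one_mul]
  have := Real.norm_exp_I_mul_ofReal_sub_one_le (x := 2 * π * (x - y))
  unfold ee
  refine this.trans ?_
  rw [Real.norm_eq_abs, abs_mul, abs_of_pos (by positivity)]
  have := Real.pi_lt_d2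
  have h2 : 0 ≤ |x - y| := abs_nonneg _
  nlinarith

lemma ee_lower (t : ℝ) : ∃ n : ℤ, |t - n| ≤ ‖1 - ee t‖ := by
  refine ⟨round t, ?_⟩
  set s := t - round t with hs
  have h1 : ee t = ee s := by
    have : t = s + (round t : ℤ) := by rw [hs]; ring
    conv_lhs => rw [this]
    rw [ee_add, ee_int, mul_one]
  have hs2 : |s| ≤ 1 / 2 := abs_sub_round t
  rw [h1, norm_sub_rev]
  have h3 := Complex.norm_exp_I_mul_ofReal_sub_one (2 * π * s)
  unfold ee
  rw [h3]
  have h4 : 2 * π * s / 2 = π * s := by ring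
  rw [h4, Real.norm_eq_abs, abs_mul]
  have hpi := Real.pi_pos
  have h5 := Real.mul_abs_le_abs_sin (x := π * s) (by
    rw [abs_mul, abs_of_pos hpi]; nlinarith)
  rw [abs_mul, abs_of_pos hpi] at h5
  have h6 : 2 / π * (π * |s|) = 2 * |s| := by field_simp
  rw [h6] at h5
  have : |(2:ℝ)| = 2 := by norm_num
  rw [this]
  have := abs_nonneg s
  linarith

lemma tsum_bound (M : ℕ) (hM : 1 ≤ M) (v : ℤ → ℂ) (B : ℝ) 
    (hv : ∀ m : ℤ, (M : ℤ) < |m| → v m = 0) (hb : ∀ m, |m| ≤ (M:ℤ) → ‖v m‖ ≤ B) :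
    ‖∑' m, v m‖ ≤ 3 * M * B := by
  have hB : 0 ≤ B := (norm_nonneg _).trans (hb 0 (by simp))
  rw [tsum_eq_sum (s := Finset.Icc (-(M:ℤ)) M)]
  · refine (norm_sum_le_of_le _ (n := fun _ => B) (fun m hm => hb m ?_)).trans ?_
    · rw [Finset.mem_Icc] at hm; rw [abs_le]; exact hm
    · rw [Finset.sum_const, Int.card_Icc, nsmul_eq_mul]
      refine mul_le_mul_of_nonneg_right ?_ hB
      have : (M + 1 - -(M:ℤ)).toNat = 2 * M + 1 := by omega
      rw [this]; push_cast
      have : (1:ℝ) ≤ M := by exact_mod_cast hM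
      linarith
  · intro m hm
    apply hv
    rw [Finset.mem_Icc, ← abs_le] at hm
    omega

lemma shift_bound (M : ℕ) (hM : 1 ≤ M) (Q : ℕ) (hQ : Q ≤ M) (u : ℤ → ℂ) (z : ℂ) (B : ℝ) 
    (hu : ∀ m : ℤ, (M : ℤ) < |m| → u m = 0)
    (hb : ∀ m, |m| ≤ (2 * M:ℤ) → ‖u (m + Q) - z * u m‖ ≤ B) :
    ‖1 - z‖ * ‖∑' m, u m‖ ≤ 6 * M * B := by
  have hs : Summable u := summable_of_ne_finset_zero (s := Finset.Icc (-(M:ℤ)) M) (by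
    intro m hm
    apply hu
    rw [Finset.mem_Icc, ← abs_le] at hm
    omega)
  have hs2 : Summable (fun m : ℤ => u (m + Q)) := (Equiv.addRight (Q:ℤ)).summable_iff.mpr hs
  have h1 : ∑' m : ℤ, u (m + Q) = ∑' m, u m := (Equiv.addRight (Q:ℤ)).tsum_eq u
  have h2 : (1 - z) * ∑' m, u m = ∑' m : ℤ, (u (m + Q) - z * u m) := by
    rw [hs2.tsum_sub (hs.mul_left z), h1, tsum_mul_left]; ring
  rw [← norm_mul, h2]
  refine (tsum_bound (2 * M) (by omega) _ B ?_ ?_).trans (le_of_eq (by push_cast; ring))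
  · intro m hm
    have hm' : 2 * (M:ℤ) < |m| := by exact_mod_cast hm
    rw [hu m (by omega), hu (m + Q) (by rw [lt_abs] at hm' ⊢; omega)]; simp
  · intro m hm
    exact hb m (by exact_mod_cast hm)

lemma square_bound (M : ℕ) (u : ℤ → ℂ) 
    (hu : ∀ m : ℤ, (M : ℤ) < |m| → u m = 0) :
    ‖∑' m, u m‖ ^ 2 ≤ ∑ h ∈ Finset.Icc (-(2 * M : ℤ)) (2 * M),
      ‖∑' n, u (n + h) * (starRingEnd ℂ) (u n)‖ := by
  set I := Finset.Icc (-(M:ℤ)) M with hI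
  set J := Finset.Icc (-(2 * M:ℤ)) (2 * M) with hJ
  have hu' : ∀ m, m ∉ I → u m = 0 := by
    intro m hm
    apply hu
    rw [Finset.mem_Icc, ← abs_le] at hm
    omega
  have h1 : ∀ n ∈ I, ∑' m, u m = ∑ h ∈ J, u (n + h) := by
    intro n hn
    rw [← (Equiv.addLeft n).tsum_eq u]
    rw [tsum_eq_sum (s := J)]
    · rfl
    · intro h hh
      apply hu'
      simp only [hI, hJ, Finset.mem_Icc, Equiv.coe_addLeft] at *
      omega
  have h2 : ∀ h, ∑' n, u (n + h) * (starRingEnd ℂ) (u n)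
      = ∑ n ∈ I, u (n + h) * (starRingEnd ℂ) (u n) := by
    intro h
    rw [tsum_eq_sum]
    intro n hn
    rw [hu' n hn]; simp
  have h3 : (∑' m, u m) * (starRingEnd ℂ) (∑' m, u m)
      = ∑ h ∈ J, ∑' n, u (n + h) * (starRingEnd ℂ) (u n) := by
    simp_rw [h2]
    rw [Finset.sum_comm]
    have : (starRingEnd ℂ) (∑' m, u m) = ∑ n ∈ I, (starRingEnd ℂ) (u n) := by
      rw [tsum_eq_sum (s := I) (fun m hm => hu' m hm), map_sum]
    rw [this, Finset.mul_sum]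
    refine Finset.sum_congr rfl fun n hn => ?_
    rw [h1 n hn, Finset.sum_mul]
  have h4 : ‖∑' m, u m‖ ^ 2 = ‖(∑' m, u m) * (starRingEnd ℂ) (∑' m, u m)‖ := by
    rw [norm_mul, RCLike.norm_conj, sq]
  rw [h4, h3]
  exact norm_sum_le _ _

/-- pigeonhole -/
lemma pigeon (N : ℕ) (T w : ℝ) (hT : 1 ≤ T) (hw : T ^ 2 ≤ w) (hwN : w ≤ N) (A : Finset ℤ)
    (hA : A ⊆ Finset.Icc (-(2 * N : ℤ)) (2 * N)) (hc : 16 * N / T ^ 2 < (A.card : ℝ)) :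
    ∃ x ∈ A, ∃ y ∈ A, x < y ∧ w / T ^ 2 ≤ ((y - x : ℤ) : ℝ) ∧ ((y - x : ℤ) : ℝ) ≤ w := by
  have hT2 : 1 ≤ T ^ 2 := one_le_pow₀ hT
  have hw1 : 1 ≤ w := hT2.trans hw
  set W := ⌈w⌉₊ with hW
  set k := ⌈w / T ^ 2⌉₊ with hk
  have hWN : W ≤ N := Nat.ceil_le.mpr hwN
  have hW1 : w ≤ W := Nat.le_ceil w
  have hWpos : 1 ≤ W := by
    have : (1:ℝ) ≤ W := hw1.trans hW1
    exact_mod_cast this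
  have hk1 : w / T ^ 2 ≤ k := Nat.le_ceil _
  have hx1 : 1 ≤ w / T ^ 2 := by rw [le_div_iff₀ (by positivity)]; linarith
  have hk2 : (k:ℝ) ≤ 2 * (w / T ^ 2) := by
    have := Nat.ceil_lt_add_one (a := w / T ^ 2) (by positivity)
    linarith
  have hkpos : 1 ≤ k := by
    have : (1:ℝ) ≤ k := hx1.trans hk1
    exact_mod_cast this
  have hWk : (W:ℝ) < w + 1 := Nat.ceil_lt_add_one (by positivity)
  have hmaps : ∀ a ∈ A, (a + 2 * N) / (W:ℤ) ∈ Finset.Icc (0:ℤ) (4 * N / W) := by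
    intro a ha
    have := hA ha
    rw [Finset.mem_Icc] at this ⊢
    constructor
    · exact Int.ediv_nonneg (by omega) (by omega)
    · exact Int.ediv_le_ediv (by omega) (by omega)
  have hcard : (Finset.Icc (0:ℤ) (4 * N / W)).card * k < A.card := by
    have e1 : (Finset.Icc (0:ℤ) (4 * N / W)).card = 4 * N / W + 1 := by
      have e0 : (4 * (N:ℤ) / W + 1 - 0) = ((4 * N / W + 1 : ℕ) : ℤ) := by push_cast; ring
      rw [Int.card_Icc, e0, Int.toNat_natCast]
    rw [e1]
    have e2 : (((4 * N / W + 1 : ℕ) * k : ℕ) : ℝ) < (A.card : ℝ) := by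
      refine lt_of_le_of_lt ?_ hc
      have e3 : ((4 * N / W : ℕ) : ℝ) ≤ 4 * N / W := by
        have := @Nat.cast_div_le ℝ _ _ _ (4 * N) W
        push_cast at this
        exact this
      have hNW : (1:ℝ) ≤ N / W := by
        rw [le_div_iff₀ (by positivity)]; rw [one_mul]; exact_mod_cast hWN
      have hNw : (N:ℝ) / W ≤ N / w := by gcongr
      push_cast
      calc (((4 * N / W : ℕ) : ℝ) + 1) * k ≤ (5 * (N / w)) * (2 * (w / T ^ 2)) := by
            gcongr
            have : (4:ℝ) * N / W = 4 * (N / W) := by ring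
            linarith
        _ = 10 * N / T ^ 2 := by field_simp; ring
        _ ≤ 16 * N / T ^ 2 := by gcongr; norm_num
    exact_mod_cast e2
  obtain ⟨i, _, hi⟩ := Finset.exists_lt_card_fiber_of_mul_lt_card_of_maps_to hmaps hcard
  set P := A.filter (fun a => (a + 2 * N) / (W:ℤ) = i) with hP
  have hPne : P.Nonempty := Finset.card_pos.mp (by omega)
  have hsub : P ⊆ Finset.Icc (P.min' hPne) (P.max' hPne) := fun a ha =>
    Finset.mem_Icc.mpr ⟨P.min'_le a ha, P.le_max' a ha⟩
  have hc2 := Finset.card_le_card hsub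
  rw [Int.card_Icc] at hc2
  have m1 := P.min'_mem hPne
  have m2 := P.max'_mem hPne
  set x := P.min' hPne
  set y := P.max' hPne
  have hd : (k:ℤ) ≤ y - x := by omega
  rw [hP, Finset.mem_filter] at m1 m2
  have hd2 : y - x < W := by
    have hWp : (0:ℤ) < W := by omega
    have a1 := Int.emod_add_mul_ediv (x + 2 * N) W
    have a2 := Int.emod_add_mul_ediv (y + 2 * N) W
    have b1 := Int.emod_nonneg (x + 2 * N) hWp.ne'
    have b2 := Int.emod_lt_of_pos (y + 2 * N) hWp
    rw [m1.2] at a1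
    rw [m2.2] at a2
    linarith
  refine ⟨x, m1.1, y, m2.1, by omega, ?_, ?_⟩
  · refine hk1.trans ?_
    exact_mod_cast hd
  · have : y - x + 1 ≤ (W:ℤ) := by omega
    have : ((y - x : ℤ) : ℝ) + 1 ≤ W := by exact_mod_cast this
    linarith

lemma trig_zero (N : ℕ) (F : ℤ → ℝ) (hF0 : ∀ m : ℤ, (N:ℤ) < |m| → F m = 0) (p : ℤ → ℝ) :
    ∀ m : ℤ, (N : ℤ) < |m| → ee (p m) * (F m : ℂ) = 0 := by
  intro m hm
  rw [hF0 m hm]; simp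

lemma inner_bound (N : ℕ) (hN : 1 ≤ N) (K : ℝ) (F : ℤ → ℝ)
    (hF0 : ∀ m : ℤ, (N:ℤ) < |m| → F m = 0) (hFK : ∀ m, |F m| ≤ K)
    (hFL : ∀ (m : ℤ) (q : ℕ), |F (m + q) - F m| ≤ K * q / N) (lam β : ℝ) (h : ℤ)
    (u : ℤ → ℂ) (hu : u = fun m : ℤ => ee (lam * (m:ℝ) ^ 2 - β * m) * (F m : ℂ)) :
    ‖∑' n, u (n + h) * (starRingEnd ℂ) (u n)‖ ≤ 3 * N * K ^ 2 ∧
    ‖1 - ee (2 * lam * h)‖ * ‖∑' n, u (n + h) * (starRingEnd ℂ) (u n)‖ ≤ 12 * K ^ 2 := by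
  have hK : 0 ≤ K := (abs_nonneg _).trans (hFK 0)
  have hNR : (0:ℝ) < N := by exact_mod_cast hN
  have hform : ∀ n : ℤ, u (n + h) * (starRingEnd ℂ) (u n)
      = ee (lam * h ^ 2 - β * h + 2 * lam * h * n) * ((F (n + h) * F n : ℝ) : ℂ) := by
    intro n
    subst hu
    simp only [map_mul, ee_conj, Complex.conj_ofReal]
    have : lam * (h:ℝ) ^ 2 - β * h + 2 * lam * h * n
      = (lam * ((n + h : ℤ) : ℝ) ^ 2 - β * ((n + h : ℤ):ℝ)) + -(lam * (n:ℝ) ^ 2 - β * n) := by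
      push_cast; ring
    rw [this, ee_add]
    push_cast
    ring
  have hz : ∀ n : ℤ, (N : ℤ) < |n| → u (n + h) * (starRingEnd ℂ) (u n) = 0 := by
    intro n hn
    rw [hform, hF0 n hn]; simp
  constructor
  · refine tsum_bound N hN _ _ hz ?_
    intro n _
    rw [hform, norm_mul, norm_ee, one_mul, Complex.norm_real, Real.norm_eq_abs, abs_mul, sq]
    gcongr
    · exact hFK _
    · exact hFK _
  · refine (shift_bound N hN 1 hN _ (ee (2 * lam * h)) (2 * K ^ 2 / N) hz ?_).trans
      (le_of_eq (by field_simp; ring))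
    intro n _
    rw [hform, hform]
    have e1 : lam * (h:ℝ) ^ 2 - β * h + 2 * lam * h * ((n + (1:ℕ) : ℤ) : ℝ)
      = 2 * lam * h + (lam * (h:ℝ) ^ 2 - β * h + 2 * lam * h * n) := by push_cast; ring
    rw [e1, ee_add, mul_assoc, ← mul_sub, ← mul_sub, norm_mul, norm_mul, norm_ee, norm_ee,
      one_mul, one_mul, ← Complex.ofReal_sub, Complex.norm_real, Real.norm_eq_abs]
    have e2 : F (n + (1:ℕ) + h) * F (n + (1:ℕ)) - F (n + h) * F n
      = F (n + h + (1:ℕ)) * (F (n + (1:ℕ)) - F n) + (F (n + h + (1:ℕ)) - F (n + h)) * F n := by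
      rw [add_right_comm n]; ring
    rw [e2]
    have g1 := hFL n 1
    have g2 := hFL (n + h) 1
    calc _ ≤ |F (n + h + (1:ℕ))| * |F (n + (1:ℕ)) - F n|
          + |F (n + h + (1:ℕ)) - F (n + h)| * |F n| := by
          rw [← abs_mul, ← abs_mul]; exact abs_add_le _ _
      _ ≤ K * (K * (1:ℕ) / N) + (K * (1:ℕ) / N) * K := by
          gcongr
          · exact hFK _
          · exact hFK _
      _ = _ := by push_cast; ring

open Classical in
lemma weyl (N : ℕ) (hN : 1 ≤ N) (K : ℝ) (F : ℤ → ℝ)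
    (hF0 : ∀ m : ℤ, (N:ℤ) < |m| → F m = 0) (hFK : ∀ m, |F m| ≤ K)
    (hFL : ∀ (m : ℤ) (q : ℕ), |F (m + q) - F m| ≤ K * q / N) (lam β T : ℝ) (hT : 1 ≤ T)
    (hbig : 11 * K * N / T < ‖∑' m : ℤ, ee (lam * (m:ℝ) ^ 2 - β * m) * (F m : ℂ)‖) :
    16 * N / T ^ 2 < (((Finset.Icc (-(2 * N : ℤ)) (2 * N)).filter
      (fun h : ℤ => ∃ n : ℤ, |2 * lam * h - n| ≤ T ^ 3 / N)).card : ℝ) := by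
  by_contra hcon
  push Not at hcon
  have hK : 0 ≤ K := (abs_nonneg _).trans (hFK 0)
  have hNR : (1:ℝ) ≤ N := by exact_mod_cast hN
  set u : ℤ → ℂ := fun m : ℤ => ee (lam * (m:ℝ) ^ 2 - β * m) * (F m : ℂ) with hu
  have hsq := square_bound N u (trig_zero N F hF0 _)
  set J := Finset.Icc (-(2 * N : ℤ)) (2 * N) with hJ
  set P : ℤ → Prop := fun h => ∃ n : ℤ, |2 * lam * h - n| ≤ T ^ 3 / N with hP
  rw [← Finset.sum_filter_add_sum_filter_not J P] at hsq
  have s1 : ∑ h ∈ J.filter P, ‖∑' n, u (n + h) * (starRingEnd ℂ) (u n)‖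
      ≤ 48 * (K ^ 2 * N ^ 2 / T ^ 2) := by
    calc _ ≤ ∑ h ∈ J.filter P, 3 * N * K ^ 2 := Finset.sum_le_sum fun h _ =>
          (inner_bound N hN K F hF0 hFK hFL lam β h u hu).1
      _ = (J.filter P).card * (3 * N * K ^ 2) := by rw [Finset.sum_const, nsmul_eq_mul]
      _ ≤ 16 * N / T ^ 2 * (3 * N * K ^ 2) := by gcongr
      _ = _ := by ring
  have s2 : ∑ h ∈ J.filter (fun h => ¬ P h), ‖∑' n, u (n + h) * (starRingEnd ℂ) (u n)‖
      ≤ 60 * (K ^ 2 * N ^ 2 / T ^ 2) := by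
    calc _ ≤ ∑ h ∈ J.filter (fun h => ¬ P h), 12 * K ^ 2 * N / T ^ 3 := by
          refine Finset.sum_le_sum fun h hh => ?_
          have hh2 := (Finset.mem_filter.mp hh).2
          have hb := (inner_bound N hN K F hF0 hFK hFL lam β h u hu).2
          obtain ⟨n, hn⟩ := ee_lower (2 * lam * h)
          have hlow : T ^ 3 / N ≤ ‖1 - ee (2 * lam * h)‖ := by
            by_contra hc
            push Not at hc
            exact hh2 ⟨n, hn.trans hc.le⟩
          have h5 : T ^ 3 / N * ‖∑' n, u (n + h) * (starRingEnd ℂ) (u n)‖ ≤ 12 * K ^ 2 :=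
            (mul_le_mul_of_nonneg_right hlow (norm_nonneg _)).trans hb
          rw [le_div_iff₀ (by positivity)]
          rw [div_mul_eq_mul_div, div_le_iff₀ (by positivity)] at h5
          linarith
      _ = (J.filter (fun h => ¬ P h)).card * (12 * K ^ 2 * N / T ^ 3) := by
          rw [Finset.sum_const, nsmul_eq_mul]
      _ ≤ (5 * N) * (12 * K ^ 2 * N / T ^ 2) := by
          gcongr
          · have h1 : (J.filter (fun h => ¬ P h)).card ≤ J.card := Finset.card_filter_le _ _
            have h2 : J.card = 4 * N + 1 := by rw [hJ, Int.card_Icc]; omega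
            have h3 : (J.filter (fun h => ¬ P h)).card ≤ 5 * N := by omega
            exact_mod_cast h3
          · norm_num
      _ = _ := by ring
  have hfin : ‖∑' m, u m‖ ^ 2 ≤ (11 * K * N / T) ^ 2 := by
    have : (11 * K * N / T) ^ 2 = 121 * (K ^ 2 * N ^ 2 / T ^ 2) := by ring
    rw [this]
    have : 0 ≤ K ^ 2 * N ^ 2 / T ^ 2 := by positivity
    linarith
  have := abs_le_of_sq_le_sq hfin (by positivity)
  exact absurd (le_trans (le_abs_self _) this) (not_le.mpr hbig)

open Classical in
lemma approx (N : ℕ) (hN : 1 ≤ N) (lam T : ℝ) (hT : 2 ≤ T) (hTN : T ^ 140 ≤ N)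
    (hc : 16 * N / T ^ 2 < (((Finset.Icc (-(2 * N : ℤ)) (2 * N)).filter
      (fun h : ℤ => ∃ n : ℤ, |2 * lam * h - n| ≤ T ^ 3 / N)).card : ℝ)) :
    ∃ (a : ℤ) (q : ℕ), 1 ≤ q ∧ (q:ℝ) ≤ T ^ 2 ∧
      |lam - (a:ℝ) / ((2 * q : ℕ) : ℝ)| ≤ T ^ 11 / N ^ 2 := by
  have hNR : (1:ℝ) ≤ N := by exact_mod_cast hN
  have hT1 : 1 ≤ T := by linarith
  have key : ∀ w : ℝ, T ^ 2 ≤ w → w ≤ N → ∃ (d : ℕ) (a : ℤ), w / T ^ 2 ≤ d ∧ (d:ℝ) ≤ w ∧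
      |2 * lam * d - a| ≤ 2 * T ^ 3 / N := by
    intro w hw hwN
    obtain ⟨x, hx, y, hy, hxy, h1, h2⟩ := pigeon N T w hT1 hw hwN _ (Finset.filter_subset _ _) hc
    obtain ⟨n, hn⟩ := (Finset.mem_filter.mp hx).2
    obtain ⟨n', hn'⟩ := (Finset.mem_filter.mp hy).2
    have hd : (((y - x).toNat : ℕ) : ℤ) = y - x := Int.toNat_of_nonneg (by omega)
    have hdR : (((y - x).toNat : ℕ) : ℝ) = ((y - x : ℤ) : ℝ) := by exact_mod_cast hd
    refine ⟨(y - x).toNat, n' - n, by rw [hdR]; exact h1, by rw [hdR]; exact h2, ?_⟩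
    rw [hdR]
    push_cast
    have : 2 * lam * ((y:ℝ) - x) - (n' - n) = (2 * lam * y - n') - (2 * lam * x - n) := by ring
    rw [this]
    have h3 := abs_sub (2 * lam * y - n') (2 * lam * x - n)
    have : 2 * T ^ 3 / N = T ^ 3 / N + T ^ 3 / N := by ring
    linarith
  have hp : ∀ k, k ≤ 140 → T ^ k ≤ N := fun k hk => (pow_le_pow_right₀ hT1 hk).trans hTN
  obtain ⟨q, a, hq1, hq2, hqa⟩ := key (T ^ 2) le_rfl (hp 2 (by norm_num))
  rw [div_self (by positivity)] at hq1
  obtain ⟨h, b, hh1, hh2, hhb⟩ := key (N / T ^ 6)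
    (by rw [le_div_iff₀ (by positivity), ← pow_add]; exact hp _ (by norm_num))
    (div_le_self (by positivity) (one_le_pow₀ hT1))
  rw [div_div, ← pow_add] at hh1
  have hhpos : (0:ℝ) < h := lt_of_lt_of_le (by positivity) hh1
  have hqpos : (0:ℝ) < q := by linarith
  have hint : a * h = b * q := by
    have hlt : |((a * h - b * q : ℤ) : ℝ)| < 1 := by
      push_cast
      have e : (a:ℝ) * h - b * q = q * (2 * lam * h - b) - h * (2 * lam * q - a) := by ring
      rw [e]
      calc _ ≤ |q * (2 * lam * h - b)| + |h * (2 * lam * q - a)| := abs_sub _ _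
        _ = q * |2 * lam * h - b| + h * |2 * lam * q - a| := by
          rw [abs_mul, abs_mul, Nat.abs_cast, Nat.abs_cast]
        _ ≤ T ^ 2 * (2 * T ^ 3 / N) + N / T ^ 6 * (2 * T ^ 3 / N) := by gcongr
        _ = 2 * T ^ 5 / N + 2 / T ^ 3 := by field_simp
        _ ≤ 1 / 4 + 1 / 4 := by
          apply add_le_add
          · rw [div_le_iff₀ (by positivity)]
            have h8 := hp 8 (by norm_num)
            have h3 : (2:ℝ) ^ 3 ≤ T ^ 3 := by gcongr
            have h5 : 0 < T ^ 5 := by positivity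
            have : T ^ 8 = T ^ 5 * T ^ 3 := by ring
            nlinarith
          · rw [div_le_iff₀ (by positivity)]
            have h3 : (2:ℝ) ^ 3 ≤ T ^ 3 := by gcongr
            linarith
        _ < 1 := by norm_num
    have h2 : |a * h - b * q| < 1 := by exact_mod_cast hlt
    have := Int.abs_lt_one_iff.mp h2
    linarith
  have hintR : (a:ℝ) * h = b * q := by exact_mod_cast hint
  refine ⟨a, q, by exact_mod_cast hq1, hq2, ?_⟩
  have e : lam - (a:ℝ) / ((2 * q : ℕ) : ℝ) = (2 * lam * h - b) / (2 * h) := by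
    push_cast
    field_simp
    linear_combination (-1) * hintR
  rw [e, abs_div, abs_of_pos (by positivity : (0:ℝ) < 2 * h), div_le_iff₀ (by positivity)]
  refine hhb.trans ?_
  calc 2 * T ^ 3 / N = T ^ 11 / N ^ 2 * (2 * (N / T ^ (6 + 2))) := by field_simp
    _ ≤ _ := by gcongr

lemma beta_bound (N : ℕ) (hN : 1 ≤ N) (K : ℝ) (F : ℤ → ℝ)
    (hF0 : ∀ m : ℤ, (N:ℤ) < |m| → F m = 0) (hFK : ∀ m, |F m| ≤ K)
    (hFL : ∀ (m : ℤ) (q : ℕ), |F (m + q) - F m| ≤ K * q / N) (lam β T : ℝ) (hT : 2 ≤ T)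
    (hTN : T ^ 140 ≤ N) (a : ℤ) (Q : ℕ) (hQ : 1 ≤ Q) (hQT : (Q:ℝ) ≤ 2 * T ^ 2)
    (hla : |lam - (a:ℝ) / Q| ≤ T ^ 11 / N ^ 2)
    (hβ : ∀ B : ℤ, T ^ 20 / N < |β - (B:ℝ) / Q|) :
    ‖∑' m : ℤ, ee (lam * (m:ℝ) ^ 2 - β * m) * (F m : ℂ)‖ ≤ 432 * K * N / T := by
  have hK : 0 ≤ K := (abs_nonneg _).trans (hFK 0)
  have hNR : (1:ℝ) ≤ N := by exact_mod_cast hN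
  have hQR : (1:ℝ) ≤ Q := by exact_mod_cast hQ
  have hT1 : 1 ≤ T := by linarith
  have hp : ∀ k, k ≤ 140 → T ^ k ≤ N := fun k hk => (pow_le_pow_right₀ hT1 hk).trans hTN
  have hQNR : (Q:ℝ) ≤ N := by
    have := hp 3 (by norm_num)
    have h2 : 0 < T ^ 2 := by positivity
    nlinarith
  have hQN : Q ≤ N := by exact_mod_cast hQNR
  set θ := lam - (a:ℝ) / Q with hθ
  have hlow : T ^ 20 / N ≤ ‖1 - ee (-(Q * β))‖ := by
    obtain ⟨n, hn⟩ := ee_lower (-(Q * β))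
    refine le_trans ?_ hn
    have h1 := (hβ (-n)).le
    have h2 : |-(Q * β) - n| = Q * |β - ((-n : ℤ) : ℝ) / Q| := by
      rw [← Nat.abs_cast Q, ← abs_mul, ← abs_neg, Nat.abs_cast]
      congr 1
      push_cast
      field_simp
      ring
    rw [h2]
    have := abs_nonneg (β - ((-n : ℤ) : ℝ) / Q)
    nlinarith
  have hmain := shift_bound N hN Q hQN (fun m : ℤ => ee (lam * (m:ℝ) ^ 2 - β * m) * (F m : ℂ))
    (ee (-(Q * β))) (72 * K * T ^ 13 / N) (trig_zero N F hF0 _) (by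
    intro m hm
    have hmR : |(m:ℝ)| ≤ 2 * N := by exact_mod_cast hm
    have e1 : ee (lam * ((m + Q : ℤ):ℝ) ^ 2 - β * ((m + Q : ℤ):ℝ))
        = ee (-(Q * β)) * ee ((a:ℝ) / Q * m ^ 2 - β * m) * ee (θ * ((m:ℝ) + Q) ^ 2) := by
      rw [← ee_add, ← ee_add]
      have : lam * ((m + Q : ℤ):ℝ) ^ 2 - β * ((m + Q : ℤ):ℝ)
        = (-(Q * β) + ((a:ℝ) / Q * m ^ 2 - β * m) + θ * ((m:ℝ) + Q) ^ 2)
          + ((2 * a * m + a * Q : ℤ) : ℝ) := by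
        rw [hθ]
        push_cast
        field_simp
        ring
      rw [this, ee_add _ ((2 * a * m + a * Q : ℤ) : ℝ), ee_int, mul_one]
    have e2 : ee (lam * (m:ℝ) ^ 2 - β * m)
        = ee ((a:ℝ) / Q * m ^ 2 - β * m) * ee (θ * (m:ℝ) ^ 2) := by
      rw [← ee_add]
      congr 1
      rw [hθ]; ring
    rw [e1, e2]
    have e3 : ee (-(Q * β)) * ee ((a:ℝ) / Q * m ^ 2 - β * m) * ee (θ * ((m:ℝ) + Q) ^ 2)
          * (F (m + Q) : ℂ)
        - ee (-(Q * β)) * (ee ((a:ℝ) / Q * m ^ 2 - β * m) * ee (θ * (m:ℝ) ^ 2) * (F m : ℂ))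
        = ee (-(Q * β)) * ee ((a:ℝ) / Q * m ^ 2 - β * m) *
          (ee (θ * ((m:ℝ) + Q) ^ 2) * ((F (m + Q) - F m : ℝ) : ℂ)
            + (ee (θ * ((m:ℝ) + Q) ^ 2) - ee (θ * (m:ℝ) ^ 2)) * (F m : ℂ)) := by
      push_cast; ring
    rw [e3, norm_mul, norm_mul, norm_ee, norm_ee, one_mul, one_mul]
    have f1 : ‖ee (θ * ((m:ℝ) + Q) ^ 2) - ee (θ * (m:ℝ) ^ 2)‖ ≤ 35 * T ^ 11 * Q / N := by
      refine (ee_sub_le _ _).trans ?_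
      have : θ * ((m:ℝ) + Q) ^ 2 - θ * (m:ℝ) ^ 2 = θ * (Q * (2 * m + Q)) := by ring
      rw [this, abs_mul, abs_mul, Nat.abs_cast]
      have h5 : |2 * (m:ℝ) + Q| ≤ 5 * N := by
        rw [abs_le] at hmR ⊢
        constructor <;> linarith
      calc 7 * (|θ| * (Q * |2 * (m:ℝ) + Q|)) ≤ 7 * (T ^ 11 / N ^ 2 * (Q * (5 * N))) := by gcongr
        _ = _ := by field_simp; ring
    calc _ ≤ ‖ee (θ * ((m:ℝ) + Q) ^ 2) * ((F (m + Q) - F m : ℝ) : ℂ)‖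
          + ‖(ee (θ * ((m:ℝ) + Q) ^ 2) - ee (θ * (m:ℝ) ^ 2)) * (F m : ℂ)‖ := norm_add_le _ _
      _ = |F (m + Q) - F m| + ‖ee (θ * ((m:ℝ) + Q) ^ 2) - ee (θ * (m:ℝ) ^ 2)‖ * |F m| := by
        rw [norm_mul, norm_mul, norm_ee, one_mul, Complex.norm_real, Complex.norm_real,
          Real.norm_eq_abs, Real.norm_eq_abs]
      _ ≤ K * Q / N + 35 * T ^ 11 * Q / N * K := by
        gcongr
        · exact hFL m Q
        · exact hFK m
      _ = (1 + 35 * T ^ 11) * (K * Q / N) := by ring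
      _ ≤ (T ^ 11 + 35 * T ^ 11) * (K * (2 * T ^ 2) / N) := by
        gcongr
        exact one_le_pow₀ hT1
      _ = _ := by ring)
  have h1 := (mul_le_mul_of_nonneg_right hlow (norm_nonneg _)).trans hmain
  have h2 : 6 * N * (72 * K * T ^ 13 / N) = 432 * K * T ^ 13 := by field_simp; ring
  rw [h2, div_mul_eq_mul_div, div_le_iff₀ (by positivity)] at h1
  rw [le_div_iff₀ (by positivity)]
  set X := ‖∑' m : ℤ, ee (lam * (m:ℝ) ^ 2 - β * m) * (F m : ℂ)‖
  have hX : 0 ≤ X := norm_nonneg _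
  have h3 : T ^ 13 * (X * T) ≤ T ^ 13 * (432 * K * N) := by
    calc T ^ 13 * (X * T) = T ^ 14 * X := by ring
      _ ≤ T ^ 20 * X := by gcongr; norm_num
      _ ≤ _ := by linarith
  exact le_of_mul_le_mul_left h3 (by positivity)

lemma main_bound (N : ℕ) (hN : 1 ≤ N) (K : ℝ) (F : ℤ → ℝ)
    (hF0 : ∀ m : ℤ, (N:ℤ) < |m| → F m = 0) (hFK : ∀ m, |F m| ≤ K)
    (hFL : ∀ (m : ℤ) (q : ℕ), |F (m + q) - F m| ≤ K * q / N) (lam β T : ℝ) (hT : 1 ≤ T)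
    (hTN : T ^ 140 ≤ N)
    (hminor : ∀ (A B : ℤ) (Q : ℕ), 1 ≤ Q → (Q:ℝ) ≤ T ^ 120 →
      |lam - (A:ℝ) / Q| ≤ T ^ 20 / N ^ 2 → T ^ 20 / N < |β - (B:ℝ) / Q|) :
    ‖∑' m : ℤ, ee (lam * (m:ℝ) ^ 2 - β * m) * (F m : ℂ)‖ ≤ 432 * K * N / T := by
  have hK : 0 ≤ K := (abs_nonneg _).trans (hFK 0)
  have hNR : (1:ℝ) ≤ N := by exact_mod_cast hN
  rcases lt_or_ge T 2 with hT2 | hT2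
  · have := tsum_bound N hN _ K (trig_zero N F hF0 (fun m => lam * (m:ℝ) ^ 2 - β * m))
      (fun m _ => by
        rw [norm_mul, norm_ee, one_mul, Complex.norm_real]; exact hFK m)
    refine this.trans ?_
    rw [le_div_iff₀ (by positivity)]
    have : 0 ≤ (N:ℝ) * K := by positivity
    nlinarith
  · by_contra hcon
    push Not at hcon
    have hbig : 11 * K * N / T < ‖∑' m : ℤ, ee (lam * (m:ℝ) ^ 2 - β * m) * (F m : ℂ)‖ := by
      refine lt_of_le_of_lt ?_ hcon
      gcongr
      norm_num
    have hc := weyl N hN K F hF0 hFK hFL lam β T hT hbig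
    obtain ⟨a, q, hq1, hq2, ha⟩ := approx N hN lam T hT2 hTN hc
    have hQ : ((2 * q : ℕ) : ℝ) ≤ 2 * T ^ 2 := by push_cast; linarith
    refine absurd (beta_bound N hN K F hF0 hFK hFL lam β T hT2 hTN a (2 * q) (by omega) hQ ha
      fun B => hminor a B (2 * q) (by omega) ?_ ?_) (not_le.mpr hcon)
    · refine hQ.trans ?_
      calc 2 * T ^ 2 ≤ T * T ^ 2 := by gcongr
        _ = T ^ 3 := by ring
        _ ≤ T ^ 120 := pow_le_pow_right₀ hT (by norm_num)
    · refine ha.trans ?_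
      gcongr
      norm_num

lemma reduce (A B : ℤ) (Q : ℕ) (hQ : 1 ≤ Q) : ∃ (A' B' : ℤ) (Q' : ℕ), 1 ≤ Q' ∧ Q' ≤ Q ∧
    Int.gcd A' (Int.gcd B' (Q' : ℤ)) = 1 ∧ (A:ℝ) / Q = A' / Q' ∧ (B:ℝ) / Q = B' / Q' := by
  set g := Int.gcd A (Int.gcd B (Q:ℤ)) with hg
  have hgQ : (g:ℤ) ∣ Q := (Int.gcd_dvd_right _ _).trans (Int.gcd_dvd_right _ _)
  have hgB : (g:ℤ) ∣ B := (Int.gcd_dvd_right _ _).trans (Int.gcd_dvd_left _ _)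
  have hgA : (g:ℤ) ∣ A := Int.gcd_dvd_left _ _
  have hgQ' : g ∣ Q := by exact_mod_cast hgQ
  obtain ⟨A', hA⟩ := hgA
  obtain ⟨B', hB⟩ := hgB
  obtain ⟨Q', hQ'⟩ := hgQ'
  have hg0 : 0 < g := Nat.pos_of_ne_zero (by rintro h; rw [h] at hQ'; omega)
  have hQ0 : 0 < Q' := Nat.pos_of_ne_zero (by rintro rfl; omega)
  have hgR : (g:ℝ) ≠ 0 := by exact_mod_cast hg0.ne'
  have hQR : (Q':ℝ) ≠ 0 := by exact_mod_cast hQ0.ne'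
  have hAR : (A:ℝ) = g * A' := by exact_mod_cast hA
  have hBR : (B:ℝ) = g * B' := by exact_mod_cast hB
  have hQQR : (Q:ℝ) = g * Q' := by exact_mod_cast hQ'
  refine ⟨A', B', Q', hQ0, by rw [hQ']; exact Nat.le_mul_of_pos_left _ hg0, ?_, ?_, ?_⟩
  · have h1 : g = g * Int.gcd A' (Int.gcd B' (Q' : ℤ)) := by
      conv_lhs => rw [hg, hA, hB, hQ']
      push_cast
      rw [Int.gcd_mul_left, Int.natAbs_natCast]
      push_cast
      rw [Int.gcd_mul_left, Int.natAbs_natCast]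
    exact Nat.eq_of_mul_eq_mul_left hg0 (by rw [mul_one]; exact h1.symm)
  · rw [hAR, hQQR, mul_div_mul_left _ _ hgR]
  · rw [hBR, hQQR, mul_div_mul_left _ _ hgR]

lemma psi_bounds (ψ : ℝ → ℝ) (hψ : ContDiff ℝ (⊤ : ℕ∞) ψ)
    (hsupp : ∀ x, ψ x ≠ 0 → 1 / 4 ≤ |x| ∧ |x| ≤ 1) :
    ∃ K : ℝ, 0 < K ∧ (∀ x, |ψ x| ≤ K) ∧ ∀ x y, |ψ x - ψ y| ≤ K * |x - y| := by
  have hcs : HasCompactSupport ψ := HasCompactSupport.intro (K := Set.Icc (-1) 1) isCompact_Icc (by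
    intro x hx
    by_contra h
    exact hx (abs_le.mp (hsupp x h).2))
  obtain ⟨K1, h1⟩ := hcs.exists_bound_of_continuous hψ.continuous
  obtain ⟨K2, h2⟩ := (hψ.of_le (by exact_mod_cast le_top)).lipschitzWith_of_hasCompactSupport hcs
    (one_ne_zero)
  refine ⟨max 1 (max K1 K2), by positivity, fun x => (h1 x).trans ?_, fun x y => ?_⟩
  · simp
  · have := h2.dist_le_mul x y
    rw [Real.dist_eq, Real.dist_eq] at this
    refine this.trans ?_
    gcongr
    simp

/-- Minor-arc estimate (e:minor): if `(λ,β)` lies in no major box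
`{|λ - A/Q| ≤ 2^{(ε-2)j}, |β - B/Q| ≤ 2^{(ε-1)j}}` with `gcd(A,B,Q) = 1`, `1 ≤ Q ≤ 2^{6jε}`,
then `|M_j(λ,β)| ≲ 2^{-δj}` for some `δ = δ(ε) > 0`. -/
theorem stmt18 (ψ : ℝ → ℝ) (hψ : ContDiff ℝ (⊤ : ℕ∞) ψ)
    (hsupp : ∀ x, ψ x ≠ 0 → 1 / 4 ≤ |x| ∧ |x| ≤ 1)
    (ε : ℝ) (hε0 : 0 < ε) (hε : ε < 1 / 7) :
    ∃ δ : ℝ, 0 < δ ∧ ∃ C : ℝ, 0 < C ∧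
    ∀ (j : ℕ), 1 ≤ j → ∀ lam β : ℝ,
    (¬ ∃ (A B : ℤ) (Q : ℕ), 1 ≤ Q ∧ (Q : ℝ) ≤ 2 ^ (6 * (j : ℝ) * ε) ∧
        Int.gcd A (Int.gcd B (Q : ℤ)) = 1 ∧
        |lam - (A : ℝ) / Q| ≤ 2 ^ ((ε - 2) * j) ∧ |β - (B : ℝ) / Q| ≤ 2 ^ ((ε - 1) * j)) →
    ‖∑' m : ℤ, Complex.exp (Complex.I *
        ((2 * π * (lam * (m : ℝ) ^ 2 - β * m) : ℝ) : ℂ)) *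
        (((2 : ℝ) ^ (-(j : ℤ)) * ψ ((2 : ℝ) ^ (-(j : ℤ)) * m) : ℝ) : ℂ)‖ ≤
      C * 2 ^ (-δ * j) := by
  obtain ⟨K, hK, hK1, hK2⟩ := psi_bounds ψ hψ hsupp
  refine ⟨ε / 20, by positivity, 432 * K, by positivity, ?_⟩
  intro j hj lam β hmin
  set N : ℕ := 2 ^ j with hNdef
  have hN : 1 ≤ N := Nat.one_le_two_pow
  have hNR : (0:ℝ) < N := by exact_mod_cast hN
  have hNr : (N:ℝ) = 2 ^ (j:ℝ) := by rw [hNdef, Real.rpow_natCast]; push_cast; rfl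
  have hinv : (2:ℝ) ^ (-(j:ℤ)) = (N:ℝ)⁻¹ := by
    rw [zpow_neg, hNdef, zpow_natCast]; push_cast; rfl
  set T : ℝ := 2 ^ (ε / 20 * j) with hTdef
  have hT1 : 1 ≤ T := Real.one_le_rpow (by norm_num) (by positivity)
  have hTpow : ∀ k : ℕ, T ^ k = 2 ^ (ε / 20 * j * k) := fun k => by
    rw [Real.rpow_mul_natCast (by norm_num)]
  have hjR : (1:ℝ) ≤ j := by exact_mod_cast hj
  have hTN : T ^ 140 ≤ N := by
    rw [hTpow, hNr]
    apply Real.rpow_le_rpow_of_exponent_le (by norm_num)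
    push_cast
    nlinarith
  have hb := main_bound N hN K (fun m : ℤ => ψ ((N:ℝ)⁻¹ * m)) (by
      intro m hm
      by_contra h
      have h1 := (hsupp _ h).2
      rw [abs_mul, abs_of_pos (by positivity), inv_mul_le_iff₀ hNR, mul_one] at h1
      have h2 : |m| ≤ (N:ℤ) := by exact_mod_cast h1
      omega) (fun m => hK1 _) (by
      intro m q
      refine (hK2 _ _).trans (le_of_eq ?_)
      have : (N:ℝ)⁻¹ * ((m + q : ℤ) : ℝ) - (N:ℝ)⁻¹ * m = q / N := by push_cast; field_simp; ring
      rw [this, abs_of_nonneg (by positivity)]; ring) lam β T hT1 hTN (by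
      intro A B Q hQ hQT hA
      by_contra hB
      push Not at hB
      obtain ⟨A', B', Q', h1, h2, h3, h4, h5⟩ := reduce A B Q hQ
      refine hmin ⟨A', B', Q', h1, ?_, h3, ?_, ?_⟩
      · have : (Q':ℝ) ≤ Q := by exact_mod_cast h2
        refine (this.trans hQT).trans (le_of_eq ?_)
        rw [hTpow]; congr 1; push_cast; ring
      · rw [← h4]
        refine hA.trans (le_of_eq ?_)
        rw [hTpow, hNr, ← Real.rpow_mul_natCast (by norm_num), ← Real.rpow_sub (by norm_num)]
        congr 1; push_cast; ring
      · rw [← h5]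
        refine hB.trans (le_of_eq ?_)
        rw [hTpow, hNr, ← Real.rpow_sub (by norm_num)]
        congr 1; push_cast; ring)
  have hsum : ∑' m : ℤ, Complex.exp (Complex.I *
        ((2 * π * (lam * (m : ℝ) ^ 2 - β * m) : ℝ) : ℂ)) *
        (((2 : ℝ) ^ (-(j : ℤ)) * ψ ((2 : ℝ) ^ (-(j : ℤ)) * m) : ℝ) : ℂ)
      = (((N:ℝ)⁻¹ : ℝ) : ℂ) *
        ∑' m : ℤ, ee (lam * (m:ℝ) ^ 2 - β * m) * (ψ ((N:ℝ)⁻¹ * m) : ℂ) := by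
    rw [← tsum_mul_left]
    refine tsum_congr fun m => ?_
    rw [hinv]
    unfold ee
    rw [Complex.ofReal_mul (N:ℝ)⁻¹]
    ring
  rw [hsum, norm_mul, Complex.norm_real, Real.norm_eq_abs, abs_of_pos (by positivity)]
  have hneg : (2:ℝ) ^ (-(ε / 20) * j) = T⁻¹ := by
    rw [hTdef, ← Real.rpow_neg (by norm_num)]; congr 1; ring
  rw [hneg, inv_mul_le_iff₀ hNR]
  refine hb.trans (le_of_eq ?_)
  ring
end
end
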